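/- arXiv:1503.02862 — 2 statements merged into one kernel-verified Lean document; each statement's English description precedes it below -/
import Mathlib

section
/- With U the Poisson extension of w(x) = (1 + |x|²)^{−(n−2γ)/2} as defined in the context, one has ∫_{ℝ^{n+1}_+} y^{a+4}·|∇_x U|² dx dy = ((a+3)(5−a)/5)·∫_{ℝ^{n+1}_+} y^{a+2}·U² dx dy. -/
/-!
The bubble `w` is a superposition of Gaussians `t ^ (-n/2) * exp (-‖x‖² / t)`, and so is the Poisson
kernel. By the semigroup law of the heat kernels, `U(·, y)` is again such a superposition, whose
mixing measure is the convolution of that of `w` with that of the kernel. The `x`-integrals of `U²`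
and `|∇ₓU|²` then become negative moments of sums of four mixing variables, and the remaining
integrals over `y` and over the two variables of the kernel are explicit: both sides are constants,
made of Gamma and Beta values, times the same energy `∬ (s + t) ^ (-(n/2 - q)) dν(s) dν(t)` of the
mixing measure `ν` of `w`, where `q = 2 - γ`. The gradient side has the constant of the `U²` side
with `q + 1` in place of `q`, and the quotient follows from `Γ(z + 1) = z Γ(z)`.
-/

namespace PoissonEnergy

open MeasureTheory Measure Real Set ProbabilityTheory Module
open scoped ENNReal

section MellinIntegrals

variable {p q r A S : ℝ}

theorem lintegral_ofReal_eq_of_integral_eq {α : Type*} [MeasurableSpace α] {μ : Measure α}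
    {f : α → ℝ} {c : ℝ} (hf : 0 ≤ᵐ[μ] f) (h : ∫ x, f x ∂μ = c) (hc : 0 < c) :
    ∫⁻ x, .ofReal (f x) ∂μ = .ofReal c := by
  have hfi : Integrable f μ := .of_integral_ne_zero (by rw [h]; exact hc.ne')
  rw [← h, ofReal_integral_eq_lintegral_ofReal hfi hf]

theorem lintegral_ofReal_Ioi_eq_of_integral_eq {f : ℝ → ℝ} {c : ℝ} (hf : ∀ t, 0 < t → 0 ≤ f t)
    (h : ∫ t in Ioi 0, f t = c) (hc : 0 < c) :
    ∫⁻ t in Ioi 0, .ofReal (f t) = .ofReal c :=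
  lintegral_ofReal_eq_of_integral_eq (ae_restrict_of_forall_mem measurableSet_Ioi hf) h hc

theorem lintegral_rpow_mul_exp_neg_mul (hp : 0 < p) (hA : 0 < A) :
    ∫⁻ t in Ioi 0, .ofReal (t ^ (p - 1) * exp (-(A * t))) = .ofReal (Gamma p * A ^ (-p)) := by
  have := Gamma_pos_of_pos hp
  refine lintegral_ofReal_Ioi_eq_of_integral_eq (fun t ht => by positivity) ?_ (by positivity)
  rw [integral_rpow_mul_exp_neg_mul_Ioi hp hA, one_div, inv_rpow hA.le, rpow_neg hA.le, mul_comm]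

theorem lintegral_rpow_mul_exp_neg_div (hp : 0 < p) (hA : 0 < A) :
    ∫⁻ t in Ioi 0, .ofReal (t ^ (-p - 1) * exp (-(A / t))) = .ofReal (Gamma p * A ^ (-p)) := by
  have := Gamma_pos_of_pos hp
  refine lintegral_ofReal_Ioi_eq_of_integral_eq (fun t ht => by positivity) ?_ (by positivity)
  have gamma_integral := integral_rpow_mul_exp_neg_mul_Ioi hp hA
  rw [one_div, inv_rpow hA.le, ← rpow_neg hA.le, mul_comm] at gamma_integral
  rw [← gamma_integral, ← integral_comp_rpow_Ioi (fun t : ℝ => t ^ (p - 1) * exp (-(A * t)))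
    (p := -1) (by norm_num)]
  refine setIntegral_congr_fun measurableSet_Ioi fun t (ht : 0 < t) => ?_
  simp only [smul_eq_mul, abs_neg, abs_one, one_mul]
  rw [← rpow_mul ht.le, ← mul_assoc, ← rpow_add ht, rpow_neg_one, div_eq_mul_inv]
  ring_nf

theorem integral_rpow_mul_exp_neg_mul_sq (hq : 0 < q) (hA : 0 < A) :
    ∫ y in Ioi 0, y ^ (2 * q - 1) * exp (-(A * y ^ 2)) = Gamma q / 2 * A ^ (-q) := by
  have gaussian_integral := integral_rpow_mul_exp_neg_mul_rpow (q := 2 * q - 1)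
    two_pos (by linarith) hA
  simp only [rpow_two, neg_mul] at gaussian_integral
  rw [gaussian_integral]
  ring_nf

theorem lintegral_rpow_mul_exp_neg_mul_sq (hq : 0 < q) (hA : 0 < A) :
    ∫⁻ y in Ioi 0, .ofReal (y ^ (2 * q - 1) * exp (-(A * y ^ 2))) =
      .ofReal (Gamma q / 2 * A ^ (-q)) := by
  have := Gamma_pos_of_pos hq
  exact lintegral_ofReal_Ioi_eq_of_integral_eq (fun y hy => by positivity)
    (integral_rpow_mul_exp_neg_mul_sq hq hA) (by positivity)

theorem lintegral_rpow_mul_add_rpow (hq : 0 < q) (hp : 0 < p) (hS : 0 < S) :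
    ∫⁻ s in Ioi 0, .ofReal (s ^ (q - 1) * (S + s) ^ (-(q + p))) =
      .ofReal (beta q p * S ^ (-p)) := by
  have := Gamma_pos_of_pos hq
  have := Gamma_pos_of_pos hp
  have := Gamma_pos_of_pos (add_pos hq hp)
  have gamma_form : ∀ s ∈ Ioi (0 : ℝ), ENNReal.ofReal (s ^ (q - 1) * (S + s) ^ (-(q + p))) =
      ∫⁻ u in Ioi 0, .ofReal ((Gamma (q + p))⁻¹ * (u ^ (q + p - 1) * exp (-(S * u)))) *
        .ofReal (s ^ (q - 1) * exp (-(u * s))) := by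
    intro s (hs : 0 < s)
    calc ENNReal.ofReal (s ^ (q - 1) * (S + s) ^ (-(q + p)))
      _ = .ofReal (s ^ (q - 1) * (Gamma (q + p))⁻¹) *
            .ofReal (Gamma (q + p) * (S + s) ^ (-(q + p))) := by
        rw [← ENNReal.ofReal_mul (by positivity)]; congr 1; field_simp
      _ = ∫⁻ u in Ioi 0, .ofReal (s ^ (q - 1) * (Gamma (q + p))⁻¹) *
            .ofReal (u ^ (q + p - 1) * exp (-((S + s) * u))) := by
        rw [← lintegral_rpow_mul_exp_neg_mul (add_pos hq hp) (by positivity),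
          lintegral_const_mul' _ _ ENNReal.ofReal_ne_top]
      _ = _ := by
        refine setLIntegral_congr_fun measurableSet_Ioi fun u (hu : 0 < u) => ?_
        rw [← ENNReal.ofReal_mul (by positivity), ← ENNReal.ofReal_mul (by positivity),
          add_mul, neg_add, exp_add]
        ring_nf
  have inner : ∀ u ∈ Ioi (0 : ℝ),
      (∫⁻ s in Ioi 0, .ofReal ((Gamma (q + p))⁻¹ * (u ^ (q + p - 1) * exp (-(S * u)))) *
        .ofReal (s ^ (q - 1) * exp (-(u * s)))) =
      .ofReal (Gamma q * (Gamma (q + p))⁻¹) * .ofReal (u ^ (p - 1) * exp (-(S * u))) := by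
    intro u (hu : 0 < u)
    rw [lintegral_const_mul' _ _ ENNReal.ofReal_ne_top, lintegral_rpow_mul_exp_neg_mul hq hu,
      ← ENNReal.ofReal_mul (by positivity), ← ENNReal.ofReal_mul (by positivity),
      show p - 1 = (q + p - 1) + -q by ring, rpow_add hu]
    ring_nf
  rw [setLIntegral_congr_fun measurableSet_Ioi gamma_form,
    lintegral_lintegral_swap (by fun_prop),
    setLIntegral_congr_fun measurableSet_Ioi inner, lintegral_const_mul' _ _ ENNReal.ofReal_ne_top,
    lintegral_rpow_mul_exp_neg_mul hp hS, ← ENNReal.ofReal_mul (by positivity), beta]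
  ring_nf

theorem inv_add_inv_rpow_neg {s t : ℝ} (hs : 0 < s) (ht : 0 < t) :
    (s⁻¹ + t⁻¹) ^ (-p) * (s ^ (-p) * t ^ (-p)) = (s + t) ^ (-p) := by
  rw [← mul_rpow hs.le ht.le, ← mul_rpow (by positivity) (by positivity)]
  congr 1
  field_simp
  ring

theorem lintegral_Ioi_rpow_mul_comp_mul (hr : 0 < r) (f : ℝ → ℝ≥0∞) :
    ∫⁻ t in Ioi 0, .ofReal (t ^ (p - 1)) * f (r * t) =
      .ofReal (r ^ (-p)) * ∫⁻ t in Ioi 0, .ofReal (t ^ (p - 1)) * f t := by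
  have hderiv : ∀ t ∈ Ioi (0 : ℝ), HasDerivWithinAt (fun t => r * t) r (Ioi 0) t := fun t _ => by
    simpa using ((hasDerivAt_id t).const_mul r).hasDerivWithinAt
  have change_of_variables := lintegral_image_eq_lintegral_abs_deriv_mul measurableSet_Ioi hderiv
    (mul_right_injective₀ hr.ne').injOn fun t => .ofReal (t ^ (p - 1)) * f t
  rw [image_mul_left_Ioi hr, mul_zero] at change_of_variables
  rw [change_of_variables, ← lintegral_const_mul' _ _ ENNReal.ofReal_ne_top]
  refine setLIntegral_congr_fun measurableSet_Ioi fun t (ht : 0 < t) => ?_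
  have cancel : r ^ (-p) * r * r ^ (p - 1) = 1 := by
    rw [← rpow_add_one hr.ne', ← rpow_add hr, ← rpow_zero r]; ring_nf
  simp only [← mul_assoc]
  rw [← ENNReal.ofReal_mul (by positivity), ← ENNReal.ofReal_mul (by positivity), abs_of_pos hr,
    mul_rpow hr.le ht.le, ← mul_assoc, cancel, one_mul]

/-- Liouville's formula: substituting `t = s * v`, then `s = r / (1 + v)`, separates the
variables. -/
theorem lintegral_rpow_mul_rpow_mul_comp_add (hp : 0 < p) (hq : 0 < q) {f : ℝ → ℝ≥0∞}
    (hf : Measurable f) :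
    ∫⁻ s in Ioi 0, ∫⁻ t in Ioi 0, .ofReal (s ^ (p - 1)) * (.ofReal (t ^ (q - 1)) * f (s + t)) =
      .ofReal (beta q p) * ∫⁻ r in Ioi 0, .ofReal (r ^ (q + p - 1)) * f r := by
  have substitute_left : ∀ s ∈ Ioi (0 : ℝ),
      ∫⁻ t in Ioi 0, .ofReal (s ^ (p - 1)) * (.ofReal (t ^ (q - 1)) * f (s + t)) =
      ∫⁻ v in Ioi 0, .ofReal (s ^ (q + p - 1)) * (.ofReal (v ^ (q - 1)) * f (s + s * v)) := by
    intro s (hs : 0 < s)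
    rw [lintegral_const_mul' _ _ ENNReal.ofReal_ne_top,
      lintegral_const_mul' _ _ ENNReal.ofReal_ne_top,
      lintegral_Ioi_rpow_mul_comp_mul (p := q) hs fun t => f (s + t), ← mul_assoc,
      ← ENNReal.ofReal_mul (by positivity), ← rpow_add hs]
    ring_nf
  have substitute_right : ∀ v ∈ Ioi (0 : ℝ),
      ∫⁻ s in Ioi 0, .ofReal (s ^ (q + p - 1)) * (.ofReal (v ^ (q - 1)) * f (s + s * v)) =
      .ofReal (v ^ (q - 1) * (1 + v) ^ (-(q + p))) *
        ∫⁻ r in Ioi 0, .ofReal (r ^ (q + p - 1)) * f r := by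
    intro v (hv : 0 < v)
    rw [ENNReal.ofReal_mul (by positivity), mul_assoc,
      ← lintegral_Ioi_rpow_mul_comp_mul (by positivity),
      ← lintegral_const_mul' _ _ ENNReal.ofReal_ne_top]
    refine lintegral_congr fun s => ?_
    rw [mul_left_comm, one_add_mul, mul_comm v]
  rw [setLIntegral_congr_fun measurableSet_Ioi substitute_left,
    lintegral_lintegral_swap (by fun_prop),
    setLIntegral_congr_fun measurableSet_Ioi substitute_right,
    lintegral_mul_const _ (by fun_prop), lintegral_rpow_mul_add_rpow hq hp one_pos, one_rpow,
    mul_one]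

end MellinIntegrals

section GaussianMixtures

variable {E : Type*} [NormedAddCommGroup E] {p : ℝ} {μ : Measure ℝ}

/-- The superposition `∫ t ^ (-p) * exp (-‖x‖² / t) dμ(t)` of Gaussians with mixing measure `μ`,
meant for measures carried by `(0, ∞)`. For `p = dim E / 2` the Gaussians are, up to a constant,
heat kernels; `p = dim E / 2 + 1` arises from differentiation. -/
noncomputable def gaussianMixture (p : ℝ) (μ : Measure ℝ) (x : E) : ℝ≥0∞ :=
  ∫⁻ t, .ofReal (t ^ (-p) * exp (-(‖x‖ ^ 2 / t))) ∂μ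

/-- The moment `∫ t ^ (-p) dμ(t)`, meant for measures carried by `(0, ∞)`. The value
`negMoment p (ν ∗ ν)` is the energy `∬ (s + t) ^ (-p) dν(s) dν(t)` of `ν`. -/
noncomputable def negMoment (p : ℝ) (μ : Measure ℝ) : ℝ≥0∞ :=
  ∫⁻ t, .ofReal (t ^ (-p)) ∂μ

theorem ae_pos_prod {ν : Measure ℝ} [SFinite ν] (hμ : ∀ᵐ t ∂μ, 0 < t) (hν : ∀ᵐ t ∂ν, 0 < t) :
    ∀ᵐ q ∂(μ.prod ν), 0 < q.1 ∧ 0 < q.2 :=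
  (quasiMeasurePreserving_fst.ae hμ).and (quasiMeasurePreserving_snd.ae hν)

theorem ae_pos_conv {ν : Measure ℝ} [SFinite ν] (hμ : ∀ᵐ t ∂μ, 0 < t) (hν : ∀ᵐ t ∂ν, 0 < t) :
    ∀ᵐ t ∂(μ ∗ ν), 0 < t := by
  refine (ae_map_iff (by fun_prop) measurableSet_Ioi).2 ?_
  filter_upwards [ae_pos_prod hμ hν] with q hq using add_pos hq.1 hq.2

theorem negMoment_conv {ν : Measure ℝ} [SFinite ν] :
    negMoment p (μ ∗ ν) = ∫⁻ q, .ofReal ((q.1 + q.2) ^ (-p)) ∂(μ.prod ν) :=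
  lintegral_conv_eq_lintegral_sum (by fun_prop)

theorem lintegral_mul_lintegral_sq {α β : Type*} [MeasurableSpace α] [MeasurableSpace β]
    {μ : Measure α} {ν : Measure β} [SFinite μ] [SFinite ν] {c : α → ℝ≥0∞} {f : α → β → ℝ≥0∞}
    (hc : Measurable c) (hf : Measurable f.uncurry) :
    ∫⁻ z, c z * (∫⁻ t, f z t ∂ν) ^ 2 ∂μ =
      ∫⁻ q, ∫⁻ z, c z * (f z q.1 * f z q.2) ∂μ ∂(ν.prod ν) := by
  have : Measurable fun r : α × β × β => f r.1 r.2.1 * f r.1 r.2.2 :=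
    (hf.comp (measurable_fst.prodMk measurable_snd.fst)).mul
      (hf.comp (measurable_fst.prodMk measurable_snd.snd))
  rw [← lintegral_lintegral_swap (by fun_prop)]
  refine lintegral_congr fun z => ?_
  have hfz : Measurable (f z) := hf.of_uncurry_left
  rw [lintegral_const_mul _ (by fun_prop),
    lintegral_prod_mul hfz.aemeasurable hfz.aemeasurable, sq]

variable [InnerProductSpace ℝ E] [FiniteDimensional ℝ E] [MeasurableSpace E] [BorelSpace E]

theorem lintegral_norm_rpow_mul_exp_neg_mul_sq [Nontrivial E] {b : ℝ} (hp : 0 < p) (hb : 0 < b) :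
    ∫⁻ x : E, .ofReal (‖x‖ ^ (2 * p - finrank ℝ E) * exp (-(b * ‖x‖ ^ 2))) =
      .ofReal (finrank ℝ E * volume.real (Metric.ball (0 : E) 1) * (Gamma p / 2) * b ^ (-p)) := by
  have := Gamma_pos_of_pos hp
  have hE : 0 < finrank ℝ E := finrank_pos
  have hball : 0 < volume.real (Metric.ball (0 : E) 1) :=
    ENNReal.toReal_pos (Metric.measure_ball_pos _ _ one_pos).ne' measure_ball_lt_top.ne
  refine lintegral_ofReal_eq_of_integral_eq (.of_forall fun x => by positivity) ?_ (by positivity)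
  rw [integral_fun_norm_addHaar volume
    fun r : ℝ => r ^ (2 * p - finrank ℝ E) * exp (-(b * r ^ 2)), nsmul_eq_mul, smul_eq_mul,
    mul_assoc, mul_assoc]
  congr 2
  calc ∫ r in Ioi (0 : ℝ), r ^ (finrank ℝ E - 1) • (r ^ (2 * p - finrank ℝ E) * exp (-(b * r ^ 2)))
    _ = ∫ r in Ioi (0 : ℝ), r ^ (2 * p - 1) * exp (-(b * r ^ 2)) := by
      refine setIntegral_congr_fun measurableSet_Ioi fun r (hr : 0 < r) => ?_
      rw [smul_eq_mul, ← rpow_natCast, ← mul_assoc, ← rpow_add hr, Nat.cast_pred hE]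
      ring_nf
    _ = Gamma p / 2 * b ^ (-p) := integral_rpow_mul_exp_neg_mul_sq hp hb

theorem lintegral_norm_rpow_mul_gaussianMixture_sq [Nontrivial E] [SFinite μ]
    (hμ : ∀ᵐ t ∂μ, 0 < t) (hp : 0 < p) :
    ∫⁻ x : E, .ofReal (‖x‖ ^ (2 * p - finrank ℝ E)) * gaussianMixture p μ x ^ 2 =
      .ofReal (finrank ℝ E * volume.real (Metric.ball (0 : E) 1) * (Gamma p / 2)) *
        negMoment p (μ ∗ μ) := by
  have := Gamma_pos_of_pos hp
  unfold gaussianMixture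
  rw [lintegral_mul_lintegral_sq (by fun_prop) (by fun_prop), negMoment_conv,
    ← lintegral_const_mul _ (by fun_prop)]
  refine lintegral_congr_ae ?_
  filter_upwards [ae_pos_prod hμ hμ] with ⟨s, t⟩ ⟨hs, ht⟩
  calc ∫⁻ x : E, .ofReal (‖x‖ ^ (2 * p - finrank ℝ E)) *
        (.ofReal (s ^ (-p) * exp (-(‖x‖ ^ 2 / s))) * .ofReal (t ^ (-p) * exp (-(‖x‖ ^ 2 / t))))
    _ = ∫⁻ x : E, .ofReal (s ^ (-p) * t ^ (-p)) *
        .ofReal (‖x‖ ^ (2 * p - finrank ℝ E) * exp (-((s⁻¹ + t⁻¹) * ‖x‖ ^ 2))) := by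
      refine lintegral_congr fun x => ?_
      rw [← ENNReal.ofReal_mul (by positivity), ← ENNReal.ofReal_mul (by positivity),
        ← ENNReal.ofReal_mul (by positivity), add_mul, neg_add, exp_add]
      ring_nf
    _ = .ofReal (finrank ℝ E * volume.real (Metric.ball (0 : E) 1) * (Gamma p / 2)) *
        .ofReal ((s + t) ^ (-p)) := by
      rw [lintegral_const_mul' _ _ ENNReal.ofReal_ne_top,
        lintegral_norm_rpow_mul_exp_neg_mul_sq hp (by positivity), ← ENNReal.ofReal_mul
        (by positivity), ← ENNReal.ofReal_mul (by positivity), ← inv_add_inv_rpow_neg hs ht]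
      ring_nf

end GaussianMixtures

section Subordination

variable {E : Type*} [NormedAddCommGroup E] [InnerProductSpace ℝ E] [FiniteDimensional ℝ E]
  [MeasurableSpace E] [BorelSpace E] {γ p q y : ℝ} {ν : Measure ℝ}

/-- The measure `y ^ (2γ) * τ ^ (-γ - 1) * exp (-y² / τ) dτ` on `(0, ∞)`, which up to a constant
subordinates the Poisson kernel of `(-Δ) ^ γ` at height `y` to the heat kernel. -/
noncomputable def poissonSubordinator (γ y : ℝ) : Measure ℝ :=
  (volume.restrict (Ioi 0)).withDensity
    fun τ => .ofReal (y ^ (2 * γ) * (τ ^ (-γ - 1) * exp (-(y ^ 2 / τ))))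

instance : SFinite (poissonSubordinator γ y) := by
  unfold poissonSubordinator; infer_instance

theorem ae_pos_poissonSubordinator : ∀ᵐ τ ∂(poissonSubordinator γ y), 0 < τ :=
  (withDensity_absolutelyContinuous _ _).ae_le (ae_restrict_mem measurableSet_Ioi)

theorem lintegral_poissonSubordinator {f : ℝ → ℝ≥0∞} (hf : Measurable f) :
    ∫⁻ τ, f τ ∂(poissonSubordinator γ y) =
      ∫⁻ τ in Ioi 0, .ofReal (y ^ (2 * γ) * (τ ^ (-γ - 1) * exp (-(y ^ 2 / τ)))) * f τ :=
  lintegral_withDensity_eq_lintegral_mul _ (by fun_prop) hf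

theorem lintegral_rpow_mul_subordinator_density_mul {s t : ℝ} (hs : 0 < s) (ht : 0 < t)
    (hq : 0 < q + 2 * γ) :
    ∫⁻ y in Ioi 0, .ofReal (y ^ (2 * q - 1) * ((y ^ (2 * γ) * (s ^ (-γ - 1) * exp (-(y ^ 2 / s)))) *
        (y ^ (2 * γ) * (t ^ (-γ - 1) * exp (-(y ^ 2 / t)))))) =
      .ofReal (Gamma (q + 2 * γ) / 2 *
        (s ^ (q + γ - 1) * (t ^ (q + γ - 1) * (s + t) ^ (-(q + 2 * γ))))) := by
  have := Gamma_pos_of_pos hq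
  have exponent_s : s ^ (q + γ - 1) = s ^ (-γ - 1) * s ^ (q + 2 * γ) := by
    rw [← rpow_add hs]; ring_nf
  have exponent_t : t ^ (q + γ - 1) = t ^ (-γ - 1) * t ^ (q + 2 * γ) := by
    rw [← rpow_add ht]; ring_nf
  calc _ = ∫⁻ y in Ioi 0, .ofReal (s ^ (-γ - 1) * t ^ (-γ - 1)) *
        .ofReal (y ^ (2 * (q + 2 * γ) - 1) * exp (-((s⁻¹ + t⁻¹) * y ^ 2))) := by
        refine setLIntegral_congr_fun measurableSet_Ioi fun y (hy : 0 < y) => ?_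
        rw [← ENNReal.ofReal_mul (by positivity), add_mul, neg_add, exp_add,
          show 2 * (q + 2 * γ) - 1 = 2 * q - 1 + 2 * γ + 2 * γ by ring, rpow_add hy, rpow_add hy]
        ring_nf
    _ = _ := by
      rw [lintegral_const_mul' _ _ ENNReal.ofReal_ne_top,
        lintegral_rpow_mul_exp_neg_mul_sq hq (by positivity), ← ENNReal.ofReal_mul (by positivity),
        exponent_s, exponent_t, ← inv_add_inv_rpow_neg hs ht, rpow_neg hs.le, rpow_neg ht.le]
      field_simp

theorem mul_lintegral_poissonSubordinator_conv (hy : 0 < y) {f : ℝ → ℝ≥0∞} (hf : Measurable f) :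
    .ofReal (y ^ (2 * q - 1)) *
        ∫⁻ r, f r ∂(poissonSubordinator γ y ∗ poissonSubordinator γ y) =
      ∫⁻ s in Ioi 0, ∫⁻ t in Ioi 0, .ofReal (y ^ (2 * q - 1) *
        ((y ^ (2 * γ) * (s ^ (-γ - 1) * exp (-(y ^ 2 / s)))) *
          (y ^ (2 * γ) * (t ^ (-γ - 1) * exp (-(y ^ 2 / t)))))) * f (s + t) := by
  rw [lintegral_conv hf, lintegral_poissonSubordinator (by fun_prop),
    ← lintegral_const_mul _ (by fun_prop)]
  refine setLIntegral_congr_fun measurableSet_Ioi fun s (hs : 0 < s) => ?_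
  rw [lintegral_poissonSubordinator (by fun_prop), ← mul_assoc,
    ← lintegral_const_mul _ (by fun_prop)]
  refine setLIntegral_congr_fun measurableSet_Ioi fun t _ => ?_
  rw [← mul_assoc, ← ENNReal.ofReal_mul (by positivity), ← ENNReal.ofReal_mul (by positivity),
    mul_assoc]

theorem lintegral_lintegral_poissonSubordinator_conv (hγ : 0 < q + γ) (hq : 0 < q + 2 * γ)
    {f : ℝ → ℝ≥0∞} (hf : Measurable f) :
    ∫⁻ y in Ioi 0, .ofReal (y ^ (2 * q - 1)) *
        ∫⁻ r, f r ∂(poissonSubordinator γ y ∗ poissonSubordinator γ y) =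
      .ofReal (Gamma (q + 2 * γ) / 2 * beta (q + γ) (q + γ)) *
        ∫⁻ r in Ioi 0, .ofReal (r ^ (q - 1)) * f r := by
  have := Gamma_pos_of_pos hq
  calc _ = ∫⁻ s in Ioi 0, ∫⁻ t in Ioi 0, .ofReal (Gamma (q + 2 * γ) / 2) *
        (.ofReal (s ^ (q + γ - 1)) *
        (.ofReal (t ^ (q + γ - 1)) * (.ofReal ((s + t) ^ (-(q + 2 * γ))) * f (s + t)))) := by
        rw [setLIntegral_congr_fun measurableSet_Ioi
          fun y hy => mul_lintegral_poissonSubordinator_conv hy hf,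
          lintegral_lintegral_swap (by fun_prop)]
        refine setLIntegral_congr_fun measurableSet_Ioi fun s (hs : 0 < s) => ?_
        rw [lintegral_lintegral_swap (by fun_prop)]
        refine setLIntegral_congr_fun measurableSet_Ioi fun t (ht : 0 < t) => ?_
        rw [lintegral_mul_const _ (by fun_prop),
          lintegral_rpow_mul_subordinator_density_mul hs ht hq, ENNReal.ofReal_mul (by positivity),
          ENNReal.ofReal_mul (by positivity), ENNReal.ofReal_mul (by positivity)]
        ring
    _ = .ofReal (Gamma (q + 2 * γ) / 2) * (.ofReal (beta (q + γ) (q + γ)) *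
          ∫⁻ r in Ioi 0, .ofReal (r ^ ((q + γ) + (q + γ) - 1)) *
            (.ofReal (r ^ (-(q + 2 * γ))) * f r)) := by
      rw [← lintegral_rpow_mul_rpow_mul_comp_add hγ hγ (by fun_prop)]
      simp only [lintegral_const_mul' _ _ ENNReal.ofReal_ne_top]
    _ = _ := by
      rw [← mul_assoc, ← ENNReal.ofReal_mul (by positivity)]
      congr 1
      refine setLIntegral_congr_fun measurableSet_Ioi fun r (hr : 0 < r) => ?_
      rw [← mul_assoc, ← ENNReal.ofReal_mul (by positivity), ← rpow_add hr]
      ring_nf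

theorem lintegral_rpow_mul_lintegral_add_rpow [SFinite ν] (hν : ∀ᵐ t ∂ν, 0 < t) (hp : 0 < p)
    (hq : 0 < q) :
    ∫⁻ r in Ioi 0, .ofReal (r ^ (q - 1)) * ∫⁻ t, .ofReal ((r + t) ^ (-(q + p))) ∂ν =
      .ofReal (beta q p) * negMoment p ν := by
  simp only [← lintegral_const_mul' _ _ ENNReal.ofReal_ne_top]
  rw [lintegral_lintegral_swap (by fun_prop), negMoment, ← lintegral_const_mul _ (by fun_prop)]
  refine lintegral_congr_ae ?_
  filter_upwards [hν] with t ht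
  rw [← ENNReal.ofReal_mul (beta_pos hq hp).le, ← lintegral_rpow_mul_add_rpow hq hp ht]
  refine setLIntegral_congr_fun measurableSet_Ioi fun r (hr : 0 < r) => ?_
  rw [← ENNReal.ofReal_mul (by positivity), add_comm]

theorem conv_conv_conv_self_comm (μ ν : Measure ℝ) [SFinite μ] [SFinite ν] :
    (ν ∗ μ) ∗ (ν ∗ μ) = (μ ∗ μ) ∗ (ν ∗ ν) := by
  rw [conv_comm ν μ, conv_assoc μ, ← conv_assoc ν μ ν, conv_comm ν μ, conv_assoc μ ν ν,
    ← conv_assoc]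

theorem lintegral_lintegral_gaussianMixture_conv_sq [Nontrivial E] [SFinite ν]
    (hν : ∀ᵐ t ∂ν, 0 < t) (hp : 0 < p) (hq : 0 < q) (hqγ : 0 < q + 2 * γ) :
    ∫⁻ y in Ioi 0, .ofReal (y ^ (2 * q - 1)) *
        ∫⁻ x : E, .ofReal (‖x‖ ^ (2 * (q + p) - finrank ℝ E)) *
          gaussianMixture (q + p) (ν ∗ poissonSubordinator γ y) x ^ 2 =
      .ofReal (finrank ℝ E * volume.real (Metric.ball (0 : E) 1) / 4 * Gamma p *
        (Gamma q * Gamma (q + 2 * γ) * beta (q + γ) (q + γ))) * negMoment p (ν ∗ ν) := by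
  have hqγ' : 0 < q + γ := by linarith
  have := Gamma_pos_of_pos hqγ
  have := Gamma_pos_of_pos (add_pos hq hp)
  have := beta_pos hqγ' hqγ'
  have plancherel (y : ℝ) := lintegral_norm_rpow_mul_gaussianMixture_sq (E := E)
    (ae_pos_conv hν (ae_pos_poissonSubordinator (γ := γ) (y := y))) (add_pos hq hp)
  have energy (y : ℝ) : negMoment (q + p)
      ((ν ∗ poissonSubordinator γ y) ∗ (ν ∗ poissonSubordinator γ y)) =
      ∫⁻ r, ∫⁻ t, .ofReal ((r + t) ^ (-(q + p))) ∂(ν ∗ ν)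
        ∂(poissonSubordinator γ y ∗ poissonSubordinator γ y) := by
    rw [conv_conv_conv_self_comm, negMoment, lintegral_conv (by fun_prop)]
  simp only [plancherel, energy, mul_left_comm (ENNReal.ofReal (_ ^ (2 * q - 1)))]
  rw [lintegral_const_mul' _ _ ENNReal.ofReal_ne_top,
    lintegral_lintegral_poissonSubordinator_conv hqγ' hqγ (by fun_prop),
    lintegral_rpow_mul_lintegral_add_rpow (ae_pos_conv hν hν) hp hq, ← mul_assoc, ← mul_assoc,
    ← ENNReal.ofReal_mul (by positivity), ← ENNReal.ofReal_mul (by positivity), beta.eq_1 q p]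
  congr 2
  field_simp
  ring

end Subordination

section PoissonExtension

variable {E : Type*} [NormedAddCommGroup E] {γ p y : ℝ} {μ ν : Measure ℝ}

theorem gaussianMixture_poissonSubordinator (hp : 0 < p + γ) (hy : 0 < y) (x : E) :
    gaussianMixture p (poissonSubordinator γ y) x =
      .ofReal (Gamma (p + γ) * (y ^ (2 * γ) * (‖x‖ ^ 2 + y ^ 2) ^ (-(p + γ)))) := by
  rw [gaussianMixture, lintegral_poissonSubordinator (by fun_prop), mul_left_comm,
    ENNReal.ofReal_mul (by positivity), ← lintegral_rpow_mul_exp_neg_div hp (by positivity),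
    ← lintegral_const_mul' _ _ ENNReal.ofReal_ne_top]
  refine setLIntegral_congr_fun measurableSet_Ioi fun τ (hτ : 0 < τ) => ?_
  rw [← ENNReal.ofReal_mul (by positivity), ← ENNReal.ofReal_mul (by positivity),
    show -(p + γ) - 1 = -γ - 1 + -p by ring, rpow_add hτ, add_div, neg_add, exp_add]
  ring_nf

variable [InnerProductSpace ℝ E]

theorem norm_sub_sq_div_add_norm_sq_div {s t : ℝ} (hs : 0 < s) (ht : 0 < t) (x ξ : E) :
    ‖x - ξ‖ ^ 2 / s + ‖ξ‖ ^ 2 / t =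
      ‖x‖ ^ 2 / (s + t) + (s⁻¹ + t⁻¹) * ‖ξ - (t / (s + t)) • x‖ ^ 2 := by
  rw [norm_sub_sq_real, norm_sub_sq_real, norm_smul, real_inner_smul_right, real_inner_comm,
    mul_pow, norm_eq_abs, sq_abs]
  field_simp
  ring

variable [FiniteDimensional ℝ E] [MeasurableSpace E] [BorelSpace E]

theorem lintegral_gaussian_mul_gaussian {s t : ℝ} (hs : 0 < s) (ht : 0 < t) (x : E) :
    ∫⁻ ξ : E, .ofReal (s ^ (-(finrank ℝ E / 2 : ℝ)) * exp (-(‖x - ξ‖ ^ 2 / s))) *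
        .ofReal (t ^ (-(finrank ℝ E / 2 : ℝ)) * exp (-(‖ξ‖ ^ 2 / t))) =
      .ofReal (π ^ (finrank ℝ E / 2 : ℝ)) *
        .ofReal ((s + t) ^ (-(finrank ℝ E / 2 : ℝ)) * exp (-(‖x‖ ^ 2 / (s + t)))) := by
  set N : ℝ := finrank ℝ E / 2
  have gaussian_integral :
      ∫ ξ : E, exp (-((s⁻¹ + t⁻¹) * ‖ξ‖ ^ 2)) = (π / (s⁻¹ + t⁻¹)) ^ N := by
    simpa only [neg_mul] using
      GaussianFourier.integral_rexp_neg_mul_sq_norm (V := E) (b := s⁻¹ + t⁻¹) (by positivity)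
  calc _ = ∫⁻ ξ : E, .ofReal (s ^ (-N) * t ^ (-N) * exp (-(‖x‖ ^ 2 / (s + t)))) *
        .ofReal (exp (-((s⁻¹ + t⁻¹) * ‖ξ - (t / (s + t)) • x‖ ^ 2))) := by
        refine lintegral_congr fun ξ => ?_
        rw [← ENNReal.ofReal_mul (by positivity), ← ENNReal.ofReal_mul (by positivity),
          mul_mul_mul_comm, ← exp_add, ← neg_add, norm_sub_sq_div_add_norm_sq_div hs ht,
          neg_add, exp_add, ← mul_assoc]
    _ = .ofReal (s ^ (-N) * t ^ (-N) * exp (-(‖x‖ ^ 2 / (s + t)))) *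
        .ofReal ((π / (s⁻¹ + t⁻¹)) ^ N) := by
      rw [lintegral_const_mul' _ _ ENNReal.ofReal_ne_top,
        lintegral_sub_right_eq_self (fun ξ : E => .ofReal (exp (-((s⁻¹ + t⁻¹) * ‖ξ‖ ^ 2)))),
        lintegral_ofReal_eq_of_integral_eq (.of_forall fun ξ => by positivity) gaussian_integral
          (by positivity)]
    _ = _ := by
      rw [← ENNReal.ofReal_mul (by positivity), ← ENNReal.ofReal_mul (by positivity),
        ← inv_add_inv_rpow_neg hs ht, div_rpow (by positivity) (by positivity),
        rpow_neg (x := s⁻¹ + t⁻¹) (by positivity)]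
      ring_nf

theorem lintegral_gaussianMixture_mul_gaussianMixture [SFinite μ] [SFinite ν]
    (hμ : ∀ᵐ t ∂μ, 0 < t) (hν : ∀ᵐ t ∂ν, 0 < t) (x : E) :
    ∫⁻ ξ : E, gaussianMixture (finrank ℝ E / 2) μ (x - ξ) *
        gaussianMixture (finrank ℝ E / 2) ν ξ =
      .ofReal (π ^ (finrank ℝ E / 2 : ℝ)) * gaussianMixture (finrank ℝ E / 2) (μ ∗ ν) x := by
  set N : ℝ := finrank ℝ E / 2
  calc _ = ∫⁻ ξ : E, ∫⁻ q, .ofReal (q.1 ^ (-N) * exp (-(‖x - ξ‖ ^ 2 / q.1))) *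
        .ofReal (q.2 ^ (-N) * exp (-(‖ξ‖ ^ 2 / q.2))) ∂(μ.prod ν) :=
        lintegral_congr fun ξ => (lintegral_prod_mul (by fun_prop) (by fun_prop)).symm
    _ = ∫⁻ q, .ofReal (π ^ N) *
        .ofReal ((q.1 + q.2) ^ (-N) * exp (-(‖x‖ ^ 2 / (q.1 + q.2)))) ∂(μ.prod ν) := by
      rw [lintegral_lintegral_swap (by fun_prop)]
      refine lintegral_congr_ae ?_
      filter_upwards [ae_pos_prod hμ hν] with q hq
      exact lintegral_gaussian_mul_gaussian hq.1 hq.2 x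
    _ = _ := by
      rw [lintegral_const_mul' _ _ ENNReal.ofReal_ne_top, gaussianMixture,
        lintegral_conv_eq_lintegral_sum (by fun_prop)]

theorem lintegral_poissonKernel_mul_gaussianMixture [SFinite ν] (hν : ∀ᵐ t ∂ν, 0 < t)
    (hγ : 0 < finrank ℝ E / 2 + γ) (hy : 0 < y) (x : E) :
    ∫⁻ ξ : E, .ofReal (y ^ (2 * γ) * (‖x - ξ‖ ^ 2 + y ^ 2) ^ (-((finrank ℝ E + 2 * γ) / 2))) *
        gaussianMixture (finrank ℝ E / 2) ν ξ =
      .ofReal (π ^ (finrank ℝ E / 2 : ℝ) / Gamma (finrank ℝ E / 2 + γ)) *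
        gaussianMixture (finrank ℝ E / 2) (ν ∗ poissonSubordinator γ y) x := by
  have hΓ := Gamma_pos_of_pos hγ
  have kernel_eq (z : E) :
      .ofReal (y ^ (2 * γ) * (‖z‖ ^ 2 + y ^ 2) ^ (-((finrank ℝ E + 2 * γ) / 2))) =
      .ofReal (Gamma (finrank ℝ E / 2 + γ))⁻¹ *
        gaussianMixture (finrank ℝ E / 2) (poissonSubordinator γ y) z := by
    rw [gaussianMixture_poissonSubordinator hγ hy, ← ENNReal.ofReal_mul (by positivity),
      inv_mul_cancel_left₀ hΓ.ne', add_div, mul_div_cancel_left₀ _ two_ne_zero]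
  simp_rw [kernel_eq, mul_assoc]
  rw [lintegral_const_mul' _ _ ENNReal.ofReal_ne_top,
    lintegral_gaussianMixture_mul_gaussianMixture ae_pos_poissonSubordinator hν, ← mul_assoc,
    ← ENNReal.ofReal_mul (by positivity), conv_comm, div_eq_inv_mul (π ^ _)]

/-- The extension of `w` to the half-space by the Poisson kernel of `(-Δ) ^ γ`, which is not
normalised to have integral one. -/
noncomputable def poissonExtension (γ : ℝ) (w : E → ℝ) (x : E) (y : ℝ) : ℝ :=
  ∫ ξ : E, y ^ (2 * γ) * (‖x - ξ‖ ^ 2 + y ^ 2) ^ (-((finrank ℝ E + 2 * γ) / 2)) * w ξ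

theorem poissonExtension_toReal_gaussianMixture [SFinite ν] (hν : ∀ᵐ t ∂ν, 0 < t)
    (hγ : 0 < finrank ℝ E / 2 + γ) (hy : 0 < y) {x : E}
    (hx : gaussianMixture (finrank ℝ E / 2) (ν ∗ poissonSubordinator γ y) x ≠ ∞) :
    poissonExtension γ (fun ξ : E => (gaussianMixture (finrank ℝ E / 2) ν ξ).toReal) x y =
      π ^ (finrank ℝ E / 2 : ℝ) / Gamma (finrank ℝ E / 2 + γ) *
        (gaussianMixture (finrank ℝ E / 2) (ν ∗ poissonSubordinator γ y) x).toReal := by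
  have := Gamma_pos_of_pos hγ
  have integrals_eq := lintegral_poissonKernel_mul_gaussianMixture hν hγ hy x
  have integral_ne_top := integrals_eq.trans_ne (ENNReal.mul_ne_top ENNReal.ofReal_ne_top hx)
  have hmeas : Measurable fun ξ : E =>
      .ofReal (y ^ (2 * γ) * (‖x - ξ‖ ^ 2 + y ^ 2) ^ (-((finrank ℝ E + 2 * γ) / 2))) *
        gaussianMixture (finrank ℝ E / 2) ν ξ := by
    unfold gaussianMixture; fun_prop
  rw [poissonExtension, ← ENNReal.toReal_ofReal (r := π ^ _ / _) (by positivity),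
    ← ENNReal.toReal_mul, ← integrals_eq,
    ← integral_toReal hmeas.aemeasurable (ae_lt_top hmeas integral_ne_top)]
  refine integral_congr_ae (.of_forall fun ξ => ?_)
  simp only
  rw [ENNReal.toReal_mul, ENNReal.toReal_ofReal (by positivity)]

end PoissonExtension

section Finiteness

variable {γ p q s y : ℝ} {μ ν : Measure ℝ}

theorem rpow_mul_exp_neg_div_le {E : Type*} [NormedAddCommGroup E] {t : ℝ} (ht : 0 < t)
    (x : E) :
    t ^ (-p) * exp (-(‖x‖ ^ 2 / t)) ≤ t ^ (-p) :=
  mul_le_of_le_one_right (by positivity) (exp_le_one_iff.2 (neg_nonpos.2 (by positivity)))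

theorem gaussianMixture_le_negMoment {E : Type*} [NormedAddCommGroup E] (hμ : ∀ᵐ t ∂μ, 0 < t)
    (x : E) : gaussianMixture p μ x ≤ negMoment p μ :=
  lintegral_mono_ae (hμ.mono fun _ ht => ENNReal.ofReal_le_ofReal (rpow_mul_exp_neg_div_le ht x))

theorem gaussianMixture_zero {E : Type*} [NormedAddCommGroup E] :
    gaussianMixture p μ (0 : E) = negMoment p μ := by
  simp [gaussianMixture, negMoment]

theorem negMoment_poissonSubordinator_ne_top (hp : 0 < p + γ) (hy : 0 < y) :
    negMoment p (poissonSubordinator γ y) ≠ ∞ := by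
  rw [← gaussianMixture_zero (E := ℝ), gaussianMixture_poissonSubordinator hp hy]
  exact ENNReal.ofReal_ne_top

theorem add_rpow_neg_le {t τ r : ℝ} (ht : 0 < t) (hτ : 0 < τ) (hr : 0 < r) (hs : 0 ≤ s) :
    (t + τ) ^ (-s) ≤ (1 + r ^ s * τ ^ (-s)) * (t + r) ^ (-s) := by
  rw [one_add_mul]
  rcases le_total r τ with h | h
  · exact (rpow_le_rpow_of_nonpos (by positivity) (by gcongr) (by linarith)).trans
      (le_add_of_nonneg_right (by positivity))
  · refine le_trans ?_ (le_add_of_nonneg_left (by positivity))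
    have rescale : t + r ≤ r * (τ⁻¹ * (t + τ)) := by
      field_simp
      nlinarith
    calc (t + τ) ^ (-s)
      _ = r ^ s * (r * (τ⁻¹ * (t + τ))) ^ (-s) * τ ^ (-s) := by
        rw [mul_rpow hr.le (by positivity), mul_rpow (by positivity) (by positivity),
          inv_rpow hτ.le, rpow_neg hr.le, rpow_neg hτ.le]
        field_simp
      _ ≤ r ^ s * (t + r) ^ (-s) * τ ^ (-s) := by
        gcongr ?_ * ?_ * _
        exact rpow_le_rpow_of_nonpos (by positivity) rescale (by linarith)
      _ = _ := by ring

theorem exists_lintegral_add_rpow_ne_top [SFinite ν] (hν : ∀ᵐ t ∂ν, 0 < t)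
    (henergy : negMoment s (ν ∗ ν) ≠ ∞) :
    ∃ r > 0, ∫⁻ t, .ofReal ((t + r) ^ (-s)) ∂ν ≠ ∞ := by
  rcases eq_zero_or_neZero ν with rfl | _
  · exact ⟨1, one_pos, by simp⟩
  · rw [negMoment, lintegral_conv (by fun_prop)] at henergy
    obtain ⟨r, hfinite, hr⟩ := ((ae_lt_top (by fun_prop) henergy).and hν).exists
    exact ⟨r, hr, by simpa only [add_comm r] using hfinite.ne⟩

theorem negMoment_conv_ne_top [SFinite μ] [SFinite ν] (hμ : ∀ᵐ t ∂μ, 0 < t)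
    (hν : ∀ᵐ t ∂ν, 0 < t) (hs : 0 ≤ s) (hsp : s ≤ p) (henergy : negMoment s (ν ∗ ν) ≠ ∞)
    (hμp : negMoment p μ ≠ ∞) (hμps : negMoment (p - s) μ ≠ ∞) :
    negMoment p (ν ∗ μ) ≠ ∞ := by
  obtain ⟨r, hr, hνr⟩ := exists_lintegral_add_rpow_ne_top hν henergy
  have pointwise {t τ : ℝ} (ht : 0 < t) (hτ : 0 < τ) : (t + τ) ^ (-p) ≤
      (t + r) ^ (-s) * (τ ^ (-(p - s)) + r ^ s * τ ^ (-p)) :=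
    calc (t + τ) ^ (-p) = (t + τ) ^ (-(p - s)) * (t + τ) ^ (-s) := by
          rw [← rpow_add (by positivity)]; ring_nf
      _ ≤ τ ^ (-(p - s)) * ((1 + r ^ s * τ ^ (-s)) * (t + r) ^ (-s)) := by
        gcongr ?_ * ?_
        · exact rpow_le_rpow_of_nonpos hτ (by linarith) (by linarith)
        · exact add_rpow_neg_le ht hτ hr hs
      _ = _ := by
        rw [show -p = -(p - s) + -s by ring, rpow_add hτ]; ring_nf
  refine ne_top_of_le_ne_top (ENNReal.mul_ne_top hνr (ENNReal.add_ne_top.2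
    ⟨hμps, ENNReal.mul_ne_top (ENNReal.ofReal_ne_top (r := r ^ s)) hμp⟩)) ?_
  rw [negMoment_conv, negMoment, negMoment, ← lintegral_const_mul _ (by fun_prop),
    ← lintegral_add_left (by fun_prop), ← lintegral_prod_mul (by fun_prop) (by fun_prop)]
  refine lintegral_mono_ae ?_
  filter_upwards [ae_pos_prod hν hμ] with ⟨t, τ⟩ ⟨ht, hτ⟩
  rw [← ENNReal.ofReal_mul (by positivity), ← ENNReal.ofReal_add (by positivity) (by positivity),
    ← ENNReal.ofReal_mul (by positivity)]
  exact ENNReal.ofReal_le_ofReal (pointwise ht hτ)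

theorem negMoment_conv_poissonSubordinator_ne_top [SFinite ν] (hν : ∀ᵐ t ∂ν, 0 < t) (hs : 0 ≤ s)
    (hsp : s ≤ p) (hpγ : 0 < p - s + γ) (henergy : negMoment s (ν ∗ ν) ≠ ∞) (hy : 0 < y) :
    negMoment p (ν ∗ poissonSubordinator γ y) ≠ ∞ :=
  negMoment_conv_ne_top ae_pos_poissonSubordinator hν hs hsp henergy
    (negMoment_poissonSubordinator_ne_top (by linarith) hy)
    (negMoment_poissonSubordinator_ne_top hpγ hy)

end Finiteness

section Differentiation

variable {E : Type*} [NormedAddCommGroup E] {p : ℝ} {μ : Measure ℝ}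

theorem integrable_rpow_neg_of_negMoment_ne_top (hμ : ∀ᵐ t ∂μ, 0 < t)
    (hp : negMoment p μ ≠ ∞) : Integrable (fun t => t ^ (-p)) μ :=
  (lintegral_ofReal_ne_top_iff_integrable (by fun_prop)
    (hμ.mono fun _ ht => (rpow_pos_of_pos ht _).le)).1 hp

theorem toReal_gaussianMixture (hμ : ∀ᵐ t ∂μ, 0 < t) (x : E) :
    (gaussianMixture p μ x).toReal = ∫ t, t ^ (-p) * exp (-(‖x‖ ^ 2 / t)) ∂μ := by
  refine (integral_eq_lintegral_of_nonneg_ae ?_ (by fun_prop)).symm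
  filter_upwards [hμ] with t ht using by positivity

variable [InnerProductSpace ℝ E]

theorem hasFDerivAt_rpow_mul_exp_neg_div {t : ℝ} (ht : 0 < t) (x : E) :
    HasFDerivAt (fun x : E => t ^ (-p) * exp (-(‖x‖ ^ 2 / t)))
      (-(2 * (t ^ (-(p + 1)) * exp (-(‖x‖ ^ 2 / t)))) • innerSL ℝ x) x := by
  have hderiv := ((((hasStrictFDerivAt_norm_sq x).hasFDerivAt.mul_const t⁻¹).neg.exp).const_mul
    (t ^ (-p)))
  simp only [← div_eq_mul_inv] at hderiv
  refine hderiv.congr_fderiv ?_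
  rw [neg_add, rpow_add ht, rpow_neg_one, smul_neg, neg_smul, ← Nat.cast_smul_eq_nsmul ℝ]
  simp only [Pi.neg_apply, smul_neg, smul_smul, neg_inj]
  congr 1
  push_cast
  ring

theorem hasFDerivAt_toReal_gaussianMixture (hμ : ∀ᵐ t ∂μ, 0 < t) (hp : negMoment p μ ≠ ∞)
    (hp1 : negMoment (p + 1) μ ≠ ∞) (x : E) :
    HasFDerivAt (fun x : E => (gaussianMixture p μ x).toReal)
      (-(2 * (gaussianMixture (p + 1) μ x).toReal) • innerSL ℝ x) x := by
  simp only [toReal_gaussianMixture hμ]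
  rw [← integral_const_mul, ← integral_neg,
    ← integral_smul_const (𝕜 := ℝ) (c := innerSL ℝ x)]
  refine hasFDerivAt_integral_of_dominated_of_fderiv_le (Metric.ball_mem_nhds x one_pos)
    (bound := fun t => 2 * t ^ (-(p + 1)) * (‖x‖ + 1)) (.of_forall fun _ => by fun_prop) ?_
    (by fun_prop) ?_ (((integrable_rpow_neg_of_negMoment_ne_top hμ hp1).const_mul _).mul_const _)
    (hμ.mono fun t ht z _ => hasFDerivAt_rpow_mul_exp_neg_div ht z)
  · refine (integrable_rpow_neg_of_negMoment_ne_top hμ hp).mono' (by fun_prop) ?_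
    filter_upwards [hμ] with t ht
    rw [norm_of_nonneg (by positivity)]
    exact rpow_mul_exp_neg_div_le ht x
  · filter_upwards [hμ] with t ht z hz
    rw [norm_smul, norm_neg, innerSL_apply_norm, norm_of_nonneg (by positivity)]
    gcongr
    · exact rpow_mul_exp_neg_div_le ht z
    · exact (norm_lt_of_mem_ball hz).le

theorem sum_deriv_sq_eq_of_hasFDerivAt_smul_innerSL {ι : Type*} [Fintype ι]
    (b : OrthonormalBasis ι ℝ E) {f : E → ℝ} {c : ℝ} {x : E}
    (hf : HasFDerivAt f (c • innerSL ℝ x) x) :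
    ∑ i, deriv (fun t : ℝ => f (x + t • b i)) 0 ^ 2 = c ^ 2 * ‖x‖ ^ 2 := by
  have partial_deriv (i : ι) : deriv (fun t : ℝ => f (x + t • b i)) 0 = c * inner ℝ x (b i) :=
    (hf.hasLineDerivAt (b i)).lineDeriv
  simp only [partial_deriv, mul_pow]
  rw [← Finset.mul_sum, b.sum_sq_inner_left]

end Differentiation

section EnergyIdentities

variable {E : Type*} [NormedAddCommGroup E] [MeasurableSpace E] [BorelSpace E] {γ p q : ℝ}
  {ν : Measure ℝ}

theorem integral_integral_toReal {α β : Type*} [MeasurableSpace α] [MeasurableSpace β]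
    {μ : Measure α} {ν : Measure β} [SFinite ν] {f : α → β → ℝ≥0∞} (hf : Measurable f.uncurry)
    (hfin : ∫⁻ a, ∫⁻ b, f a b ∂ν ∂μ ≠ ∞) :
    ∫ a, ∫ b, (f a b).toReal ∂ν ∂μ = (∫⁻ a, ∫⁻ b, f a b ∂ν ∂μ).toReal := by
  have hmeas : Measurable fun a => ∫⁻ b, f a b ∂ν := hf.lintegral_prod_right'
  have hae := ae_lt_top hmeas hfin
  rw [← integral_toReal hmeas.aemeasurable hae]
  refine integral_congr_ae ?_
  filter_upwards [hae] with a ha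
  exact integral_toReal hf.of_uncurry_left.aemeasurable (ae_lt_top hf.of_uncurry_left ha.ne)

theorem measurable_gaussianMixture_conv_poissonSubordinator [SFinite ν] :
    Measurable fun z : ℝ × E => gaussianMixture p (ν ∗ poissonSubordinator γ z.1) z.2 := by
  have explicit (z : ℝ × E) : gaussianMixture p (ν ∗ poissonSubordinator γ z.1) z.2 =
      ∫⁻ t, (∫⁻ τ in Ioi 0, .ofReal (z.1 ^ (2 * γ) * (τ ^ (-γ - 1) * exp (-(z.1 ^ 2 / τ)))) *
        .ofReal ((t + τ) ^ (-p) * exp (-(‖z.2‖ ^ 2 / (t + τ))))) ∂ν := by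
    rw [gaussianMixture, lintegral_conv (by fun_prop)]
    refine lintegral_congr fun t => ?_
    rw [lintegral_poissonSubordinator (by fun_prop)]
  simp only [explicit]
  fun_prop

variable [InnerProductSpace ℝ E] [FiniteDimensional ℝ E]

theorem integral_integral_gaussianMixture_conv_sq [Nontrivial E] [SFinite ν]
    (hν : ∀ᵐ t ∂ν, 0 < t) (hp : 0 < p) (hq : 0 < q) (hqγ : 0 < q + 2 * γ)
    (henergy : negMoment p (ν ∗ ν) ≠ ∞) :
    ∫ y in Ioi 0, ∫ x : E, y ^ (2 * q - 1) * (‖x‖ ^ (2 * (q + p) - finrank ℝ E) *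
        (gaussianMixture (q + p) (ν ∗ poissonSubordinator γ y) x).toReal ^ 2) =
      finrank ℝ E * volume.real (Metric.ball (0 : E) 1) / 4 * Gamma p *
        (Gamma q * Gamma (q + 2 * γ) * beta (q + γ) (q + γ)) * (negMoment p (ν ∗ ν)).toReal := by
  have := Gamma_pos_of_pos hp
  have := Gamma_pos_of_pos hq
  have := Gamma_pos_of_pos hqγ
  have hβ : 0 < beta (q + γ) (q + γ) := beta_pos (by linarith) (by linarith)
  have hmeas : Measurable (Function.uncurry fun (y : ℝ) (x : E) => .ofReal (y ^ (2 * q - 1)) *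
      (.ofReal (‖x‖ ^ (2 * (q + p) - finrank ℝ E)) *
        gaussianMixture (q + p) (ν ∗ poissonSubordinator γ y) x ^ 2)) :=
    .mul (by fun_prop) (.mul (by fun_prop)
      (measurable_gaussianMixture_conv_poissonSubordinator.pow_const 2))
  have lintegral_eq := lintegral_lintegral_gaussianMixture_conv_sq (E := E) hν hp hq hqγ
  simp only [← lintegral_const_mul' _ _ ENNReal.ofReal_ne_top] at lintegral_eq
  have real_eq := integral_integral_toReal hmeas (μ := volume.restrict (Ioi 0)) (ν := volume)
    (lintegral_eq.trans_ne (ENNReal.mul_ne_top ENNReal.ofReal_ne_top henergy))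
  rw [lintegral_eq, ENNReal.toReal_mul, ENNReal.toReal_ofReal (by positivity)] at real_eq
  rw [← real_eq]
  refine setIntegral_congr_fun measurableSet_Ioi fun y (hy : 0 < y) => ?_
  refine integral_congr_ae (.of_forall fun x => ?_)
  simp only [ENNReal.toReal_mul, ENNReal.toReal_pow]
  rw [ENNReal.toReal_ofReal (by positivity), ENNReal.toReal_ofReal (by positivity)]

theorem Gamma_mul_Gamma_mul_beta_add_one (hq : 0 < q) (hqγ : 0 < q + 2 * γ) :
    Gamma (q + 1) * Gamma (q + 1 + 2 * γ) * beta (q + 1 + γ) (q + 1 + γ) =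
      q * (q + 2 * γ) * (q + γ) / (2 * q + 2 * γ + 1) / 2 *
        (Gamma q * Gamma (q + 2 * γ) * beta (q + γ) (q + γ)) := by
  have hqγ' : 0 < q + γ := by linarith
  have hsum := add_pos hqγ' hqγ'
  have := Gamma_pos_of_pos hsum
  rw [beta, beta, show q + 1 + 2 * γ = q + 2 * γ + 1 by ring, show q + 1 + γ = q + γ + 1 by ring,
    show q + γ + 1 + (q + γ + 1) = (q + γ) + (q + γ) + 1 + 1 by ring, Gamma_add_one hq.ne',
    Gamma_add_one hqγ'.ne', Gamma_add_one hqγ.ne', Gamma_add_one (by positivity),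
    Gamma_add_one hsum.ne']
  have : 0 < 2 * q + 2 * γ + 1 := by linarith
  field_simp
  ring

end EnergyIdentities

section PoissonExtensionOfMixture

variable {E : Type*} [NormedAddCommGroup E] [InnerProductSpace ℝ E] [FiniteDimensional ℝ E]
  [MeasurableSpace E] [BorelSpace E] {γ q y : ℝ} {ν : Measure ℝ} {w : E → ℝ}

theorem poissonExtension_eq_of_negMoment_ne_top [SFinite ν] (hν : ∀ᵐ t ∂ν, 0 < t)
    (hw : ∀ ξ, w ξ = (gaussianMixture (finrank ℝ E / 2) ν ξ).toReal) (hq : 0 < q)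
    (hqγ : 0 < q + γ) (hqE : q < finrank ℝ E / 2)
    (henergy : negMoment (finrank ℝ E / 2 - q) (ν ∗ ν) ≠ ∞) (hy : 0 < y) (x : E) :
    poissonExtension γ w x y = π ^ (finrank ℝ E / 2 : ℝ) / Gamma (finrank ℝ E / 2 + γ) *
      (gaussianMixture (finrank ℝ E / 2) (ν ∗ poissonSubordinator γ y) x).toReal := by
  have moment_ne_top := negMoment_conv_poissonSubordinator_ne_top (p := finrank ℝ E / 2)
    (γ := γ) hν (sub_pos.2 hqE).le (sub_le_self _ hq.le) (by linarith) henergy hy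
  rw [funext hw]
  exact poissonExtension_toReal_gaussianMixture hν (by linarith) hy (ne_top_of_le_ne_top
    moment_ne_top (gaussianMixture_le_negMoment (ae_pos_conv hν ae_pos_poissonSubordinator) x))

theorem hasFDerivAt_poissonExtension [SFinite ν] (hν : ∀ᵐ t ∂ν, 0 < t)
    (hw : ∀ ξ, w ξ = (gaussianMixture (finrank ℝ E / 2) ν ξ).toReal) (hq : 0 < q)
    (hqγ : 0 < q + γ) (hqE : q < finrank ℝ E / 2)
    (henergy : negMoment (finrank ℝ E / 2 - q) (ν ∗ ν) ≠ ∞) (hy : 0 < y) (x : E) :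
    HasFDerivAt (poissonExtension γ w · y)
      ((π ^ (finrank ℝ E / 2 : ℝ) / Gamma (finrank ℝ E / 2 + γ) *
        -(2 * (gaussianMixture (finrank ℝ E / 2 + 1) (ν ∗ poissonSubordinator γ y) x).toReal)) •
          innerSL ℝ x) x := by
  have moment_ne_top {p : ℝ} (hp : finrank ℝ E / 2 ≤ p) :
      negMoment p (ν ∗ poissonSubordinator γ y) ≠ ∞ :=
    negMoment_conv_poissonSubordinator_ne_top hν (sub_pos.2 hqE).le (by linarith) (by linarith)
      henergy hy
  rw [funext (poissonExtension_eq_of_negMoment_ne_top hν hw hq hqγ hqE henergy hy), mul_smul]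
  exact (hasFDerivAt_toReal_gaussianMixture (ae_pos_conv hν ae_pos_poissonSubordinator)
    (moment_ne_top le_rfl) (moment_ne_top (by linarith)) x).const_mul _

theorem integral_rpow_mul_poissonExtension_sq [SFinite ν] (hν : ∀ᵐ t ∂ν, 0 < t)
    (hw : ∀ ξ, w ξ = (gaussianMixture (finrank ℝ E / 2) ν ξ).toReal) (hq : 0 < q)
    (hqγ : 0 < q + 2 * γ) (hqE : q < finrank ℝ E / 2)
    (henergy : negMoment (finrank ℝ E / 2 - q) (ν ∗ ν) ≠ ∞) :
    ∫ y in Ioi 0, ∫ x : E, y ^ (2 * q - 1) * poissonExtension γ w x y ^ 2 =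
      (π ^ (finrank ℝ E / 2 : ℝ) / Gamma (finrank ℝ E / 2 + γ)) ^ 2 *
        (finrank ℝ E * volume.real (Metric.ball (0 : E) 1) / 4 * Gamma (finrank ℝ E / 2 - q) *
          (Gamma q * Gamma (q + 2 * γ) * beta (q + γ) (q + γ)) *
            (negMoment (finrank ℝ E / 2 - q) (ν ∗ ν)).toReal) := by
  have : Nontrivial E := nontrivial_of_finrank_pos (Nat.cast_pos.1 (by linarith : (0 : ℝ) < _))
  rw [← integral_integral_gaussianMixture_conv_sq hν (sub_pos.2 hqE) hq hqγ henergy,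
    ← integral_const_mul]
  refine setIntegral_congr_fun measurableSet_Ioi fun y (hy : 0 < y) => ?_
  rw [← integral_const_mul]
  refine integral_congr_ae (.of_forall fun x => ?_)
  beta_reduce
  rw [poissonExtension_eq_of_negMoment_ne_top hν hw hq (by linarith) hqE henergy hy, add_sub_cancel,
    mul_div_cancel₀ _ two_ne_zero, sub_self, rpow_zero]
  ring

theorem integral_rpow_mul_sum_deriv_poissonExtension_sq {ι : Type*} [Fintype ι]
    (b : OrthonormalBasis ι ℝ E) [SFinite ν] (hν : ∀ᵐ t ∂ν, 0 < t)
    (hw : ∀ ξ, w ξ = (gaussianMixture (finrank ℝ E / 2) ν ξ).toReal) (hq : 0 < q)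
    (hqγ : 0 < q + 2 * γ) (hqE : q < finrank ℝ E / 2)
    (henergy : negMoment (finrank ℝ E / 2 - q) (ν ∗ ν) ≠ ∞) :
    ∫ y in Ioi 0, ∫ x : E, y ^ (2 * q + 1) *
        ∑ i, deriv (fun t : ℝ => poissonExtension γ w (x + t • b i) y) 0 ^ 2 =
      (2 * (π ^ (finrank ℝ E / 2 : ℝ) / Gamma (finrank ℝ E / 2 + γ))) ^ 2 *
        (finrank ℝ E * volume.real (Metric.ball (0 : E) 1) / 4 * Gamma (finrank ℝ E / 2 - q) *
          (Gamma (q + 1) * Gamma (q + 1 + 2 * γ) * beta (q + 1 + γ) (q + 1 + γ)) *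
            (negMoment (finrank ℝ E / 2 - q) (ν ∗ ν)).toReal) := by
  have : Nontrivial E := nontrivial_of_finrank_pos (Nat.cast_pos.1 (by linarith : (0 : ℝ) < _))
  rw [← integral_integral_gaussianMixture_conv_sq hν (sub_pos.2 hqE) (by linarith) (by linarith)
    henergy, ← integral_const_mul]
  refine setIntegral_congr_fun measurableSet_Ioi fun y (hy : 0 < y) => ?_
  rw [← integral_const_mul]
  refine integral_congr_ae (.of_forall fun x => ?_)
  beta_reduce
  rw [sum_deriv_sq_eq_of_hasFDerivAt_smul_innerSL b
      (hasFDerivAt_poissonExtension hν hw hq (by linarith) hqE henergy hy x),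
    show q + 1 + (finrank ℝ E / 2 - q) = finrank ℝ E / 2 + 1 by ring,
    show 2 * (finrank ℝ E / 2 + 1) - finrank ℝ E = (2 : ℝ) by ring, rpow_two,
    show 2 * (q + 1) - 1 = 2 * q + 1 by ring]
  ring

end PoissonExtensionOfMixture

section Bubbles

variable {E : Type*} [NormedAddCommGroup E] {p q s : ℝ} {ν : Measure ℝ}

/-- The mixing measure of the bubble `(1 + ‖x‖²) ^ (-s)` as a Gaussian mixture with exponent `p`:
an inverse Gamma distribution with an extra factor `t ^ p` in the density. -/
noncomputable def bubbleMixing (p s : ℝ) : Measure ℝ :=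
  ENNReal.ofReal (Gamma s)⁻¹ • poissonSubordinator (s - p) 1

instance : SFinite (bubbleMixing p s) := by
  unfold bubbleMixing; infer_instance

theorem ae_pos_bubbleMixing : ∀ᵐ t ∂(bubbleMixing p s), 0 < t :=
  ae_smul_measure ae_pos_poissonSubordinator _

theorem gaussianMixture_bubbleMixing (hs : 0 < s) (x : E) :
    gaussianMixture p (bubbleMixing p s) x = .ofReal ((1 + ‖x‖ ^ 2) ^ (-s)) := by
  have hΓ := Gamma_pos_of_pos hs
  have subordinator_mixture :=
    gaussianMixture_poissonSubordinator (γ := s - p) (p := p) (by linarith) one_pos x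
  rw [gaussianMixture] at subordinator_mixture
  rw [gaussianMixture, bubbleMixing, lintegral_smul_measure, subordinator_mixture, smul_eq_mul,
    ← ENNReal.ofReal_mul (by positivity), add_sub_cancel, one_rpow, one_mul, one_pow,
    inv_mul_cancel_left₀ hΓ.ne', add_comm]

theorem negMoment_bubbleMixing_ne_top (hq : 0 < q + (s - p)) :
    negMoment q (bubbleMixing p s) ≠ ∞ := by
  rw [negMoment, bubbleMixing, lintegral_smul_measure]
  exact ENNReal.mul_ne_top ENNReal.ofReal_ne_top
    (negMoment_poissonSubordinator_ne_top hq one_pos)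

theorem negMoment_two_mul_conv_self_le [SFinite ν] (hν : ∀ᵐ t ∂ν, 0 < t) (hq : 0 ≤ q) :
    negMoment (2 * q) (ν ∗ ν) ≤ negMoment q ν * negMoment q ν := by
  rw [negMoment_conv, negMoment, ← lintegral_prod_mul (by fun_prop) (by fun_prop)]
  refine lintegral_mono_ae ?_
  filter_upwards [ae_pos_prod hν hν] with ⟨s, t⟩ ⟨hs, ht⟩
  rw [← ENNReal.ofReal_mul (by positivity), ← mul_rpow hs.le ht.le]
  refine ENNReal.ofReal_le_ofReal ?_
  calc (s + t) ^ (-(2 * q)) = ((s + t) ^ 2) ^ (-q) := by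
        rw [← rpow_natCast_mul (by positivity)]; push_cast; ring_nf
    _ ≤ (s * t) ^ (-q) :=
      rpow_le_rpow_of_nonpos (by positivity) (by nlinarith [mul_pos hs ht]) (by linarith)

theorem negMoment_bubbleMixing_conv_self_ne_top (hq : 0 ≤ q) (hqs : 0 < q / 2 + (s - p)) :
    negMoment q (bubbleMixing p s ∗ bubbleMixing p s) ≠ ∞ := by
  have moment_ne_top := negMoment_bubbleMixing_ne_top hqs
  refine ne_top_of_le_ne_top (ENNReal.mul_ne_top moment_ne_top moment_ne_top) ?_
  simpa only [mul_div_cancel₀ _ (two_ne_zero' ℝ)] using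
    negMoment_two_mul_conv_self_le (q := q / 2) (ae_pos_bubbleMixing (p := p) (s := s))
      (by linarith)

end Bubbles

section EnergyRatio

variable {E ι : Type*} [NormedAddCommGroup E] [InnerProductSpace ℝ E] [FiniteDimensional ℝ E]
  [MeasurableSpace E] [BorelSpace E] [Fintype ι] {γ q : ℝ}

theorem integral_rpow_mul_sum_deriv_poissonExtension_sq_eq_mul (b : OrthonormalBasis ι ℝ E)
    {ν : Measure ℝ} [SFinite ν] (hν : ∀ᵐ t ∂ν, 0 < t) {w : E → ℝ}
    (hw : ∀ ξ, w ξ = (gaussianMixture (finrank ℝ E / 2) ν ξ).toReal) (hq : 0 < q)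
    (hqγ : 0 < q + 2 * γ) (hqE : q < finrank ℝ E / 2)
    (henergy : negMoment (finrank ℝ E / 2 - q) (ν ∗ ν) ≠ ∞) :
    ∫ y in Ioi 0, ∫ x : E, y ^ (2 * q + 1) *
        ∑ i, deriv (fun t : ℝ => poissonExtension γ w (x + t • b i) y) 0 ^ 2 =
      2 * (q * (q + 2 * γ) * (q + γ)) / (2 * q + 2 * γ + 1) *
        ∫ y in Ioi 0, ∫ x : E, y ^ (2 * q - 1) * poissonExtension γ w x y ^ 2 := by
  rw [integral_rpow_mul_sum_deriv_poissonExtension_sq b hν hw hq hqγ hqE henergy,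
    integral_rpow_mul_poissonExtension_sq hν hw hq hqγ hqE henergy,
    Gamma_mul_Gamma_mul_beta_add_one hq hqγ]
  ring

end EnergyRatio

end PoissonEnergy

open PoissonEnergy MeasureTheory Real Set Module in
theorem stmt_12_general {E ι : Type*} [NormedAddCommGroup E] [InnerProductSpace ℝ E]
    [FiniteDimensional ℝ E] [MeasurableSpace E] [BorelSpace E] [Fintype ι]
    (b : OrthonormalBasis ι ℝ E) {γ q s : ℝ} (hq : 0 < q) (hqγ : 0 < q + 2 * γ)
    (hqE : q < finrank ℝ E / 2) (hs : finrank ℝ E / 2 + q < 2 * s)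
    {w : E → ℝ} (hw : ∀ ξ, w ξ = (1 + ‖ξ‖ ^ 2) ^ (-s)) :
    ∫ y in Ioi 0, ∫ x : E, y ^ (2 * q + 1) *
        ∑ i, deriv (fun t : ℝ => poissonExtension γ w (x + t • b i) y) 0 ^ 2 =
      2 * (q * (q + 2 * γ) * (q + γ)) / (2 * q + 2 * γ + 1) *
        ∫ y in Ioi 0, ∫ x : E, y ^ (2 * q - 1) * poissonExtension γ w x y ^ 2 := by
  refine integral_rpow_mul_sum_deriv_poissonExtension_sq_eq_mul b
    (ae_pos_bubbleMixing (p := finrank ℝ E / 2) (s := s)) (fun ξ => ?_) hq hqγ hqE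
    (negMoment_bubbleMixing_conv_self_ne_top (by linarith) (by linarith))
  rw [hw, gaussianMixture_bubbleMixing (by linarith), ENNReal.toReal_ofReal (by positivity)]

open MeasureTheory Real in
theorem stmt_12 (γ : ℝ) (hγ : γ ∈ Set.Ioo (0:ℝ) 1) (a : ℝ) (ha : a = 1 - 2*γ)
    (n : ℕ) (hn : 4 + 2*γ < (n:ℝ))
    (w : EuclideanSpace ℝ (Fin n) → ℝ)
    (hw : ∀ x : EuclideanSpace ℝ (Fin n), w x = (1 + ‖x‖^2) ^ (-(((n:ℝ) - 2*γ)/2)))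
    (U : EuclideanSpace ℝ (Fin n) → ℝ → ℝ)
    (hU : ∀ x : EuclideanSpace ℝ (Fin n), ∀ y : ℝ,
      U x y = ∫ ξ : EuclideanSpace ℝ (Fin n),
        y ^ (2*γ) * (‖x - ξ‖^2 + y^2) ^ (-(((n:ℝ) + 2*γ)/2)) * w ξ) :
    ∫ y in Set.Ioi (0:ℝ), ∫ x : EuclideanSpace ℝ (Fin n),
      y ^ (a+4) * (∑ i : Fin n,
        (deriv (fun t : ℝ => U (x + t • EuclideanSpace.single i 1) y) 0)^2) =
    ((a+3)*(5-a)/5) * ∫ y in Set.Ioi (0:ℝ), ∫ x : EuclideanSpace ℝ (Fin n),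
      y ^ (a+2) * (U x y)^2 := by
  obtain ⟨hγ0, hγ1⟩ := hγ
  have U_eq : U = PoissonEnergy.poissonExtension γ w := by
    funext x y
    rw [hU, PoissonEnergy.poissonExtension, finrank_euclideanSpace_fin]
  have energy_ratio := stmt_12_general (EuclideanSpace.basisFun (Fin n) ℝ) (γ := γ) (q := 2 - γ)
    (by linarith) (by linarith) (by rw [finrank_euclideanSpace_fin]; linarith)
    (by rw [finrank_euclideanSpace_fin]; linarith) hw
  simp only [EuclideanSpace.basisFun_apply] at energy_ratio
  rw [ha, U_eq, show 1 - 2 * γ + 4 = 2 * (2 - γ) + 1 by ring,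
    show 1 - 2 * γ + 2 = 2 * (2 - γ) - 1 by ring, energy_ratio]
  ring
end

section
/- With U the Poisson extension of w(x) = (1 + |x|²)^{−(n−2γ)/2} as defined in the context, one has ∫_{ℝ^{n+1}_+} y^{a+2}·x₁²·(∂_y U)² dx dy = [(3+a) / (20·n·(3−a)·(n−3))]·(5n³ − 30n² − (a² + 2a − 55)n − 2a² + 16a − 30)·∫_{ℝ^{n+1}_+} y^{a+2}·U² dx dy. -/
/-!
Expanding both the Poisson kernel and the bubble into Gaussians exhibits `U(·, y)` as a positive
multiple of `∫ (S + T) ^ (-n / 2) exp (-|x| ^ 2 / (S + T)) dμ(S) dν(T)`, with `μ`, `ν` inverse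
gamma laws of scales `y ^ 2` and `1`. The inner product in `L²(ℝⁿ)` of the Gaussians with parameters
`S` and `T` is a multiple of
`(S + T) ^ (-n / 2) = Γ(n / 2)⁻¹ ∫ k ^ (n / 2 - 1) exp (-k S) exp (-k T) dk`,
so that the square of the `L²` norm of a mixture is a weighted `L²` norm of the Laplace transform of
the mixing law; the weight `x₁ ^ 2` replaces the Laplace transform by its derivative. For inverse
gamma laws these transforms are Bessel functions of `k y ^ 2` and of `k`, and `y ∂_y U` is a
combination of two mixtures of the same kind. The substitution `z = k y ^ 2` then separates the
variables and leaves Mellin moments of products of two Bessel functions: quotients of Gamma values,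
whose mutual ratios are rational by `Γ(s + 1) = s Γ(s)`.
-/

section
open MeasureTheory ProbabilityTheory Real Set Filter Topology
open scoped ENNReal RealInnerProductSpace

/-- The measure `t ^ (s - 1) dt` on `(0, ∞)`: integrating against it is the Mellin transform
at `s`. -/
noncomputable def rpowMeasure (s : ℝ) : Measure ℝ :=
  (volume.restrict (Ioi 0)).withDensity fun t ↦ ENNReal.ofReal (t ^ (s - 1))

instance (s : ℝ) : SFinite (rpowMeasure s) := by
  unfold rpowMeasure
  infer_instance

lemma lintegral_rpowMeasure (s : ℝ) (f : ℝ → ℝ≥0∞) :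
    ∫⁻ t, f t ∂rpowMeasure s = ∫⁻ t in Ioi 0, ENNReal.ofReal (t ^ (s - 1)) * f t :=
  lintegral_withDensity_eq_lintegral_mul_non_measurable _ (by fun_prop)
    (.of_forall fun _ ↦ ENNReal.ofReal_lt_top) f

lemma integral_rpowMeasure (s : ℝ) (f : ℝ → ℝ) :
    ∫ t, f t ∂rpowMeasure s = ∫ t in Ioi 0, t ^ (s - 1) * f t := by
  rw [rpowMeasure, integral_withDensity_eq_integral_toReal_smul (by fun_prop)
    (.of_forall fun _ ↦ ENNReal.ofReal_lt_top)]
  refine setIntegral_congr_fun measurableSet_Ioi fun t ht ↦ ?_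
  simp [ENNReal.toReal_ofReal (rpow_nonneg (mem_Ioi.1 ht).le _)]

lemma ae_pos_rpowMeasure (s : ℝ) : ∀ᵐ t ∂rpowMeasure s, 0 < t :=
  (withDensity_absolutelyContinuous _ _).ae_le (ae_restrict_mem measurableSet_Ioi)

lemma lintegral_rpowMeasure_congr {s : ℝ} {f g : ℝ → ℝ≥0∞} (h : ∀ t, 0 < t → f t = g t) :
    ∫⁻ t, f t ∂rpowMeasure s = ∫⁻ t, g t ∂rpowMeasure s :=
  lintegral_congr_ae ((ae_pos_rpowMeasure s).mono h)

lemma lintegral_ofReal_rpow_mul_rpowMeasure (a s : ℝ) (f : ℝ → ℝ≥0∞) :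
    ∫⁻ t, ENNReal.ofReal (t ^ a) * f t ∂rpowMeasure s = ∫⁻ t, f t ∂rpowMeasure (s + a) := by
  simp only [lintegral_rpowMeasure]
  refine setLIntegral_congr_fun measurableSet_Ioi fun t ht ↦ ?_
  have ht : 0 < t := ht
  rw [← mul_assoc, ← ENNReal.ofReal_mul (by positivity), ← rpow_add ht]
  ring_nf

lemma lintegral_rpowMeasure_comp_mul_rpow {c p : ℝ} (hc : 0 < c) (hp : 0 < p) (s : ℝ)
    (f : ℝ → ℝ≥0∞) :
    ∫⁻ t, f t ∂rpowMeasure s =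
      ENNReal.ofReal (p * c ^ s) * ∫⁻ t, f (c * t ^ p) ∂rpowMeasure (p * s) := by
  have himage : (fun t : ℝ ↦ c * t ^ p) '' Ioi 0 = Ioi 0 := by
    refine Subset.antisymm ?_ fun t (ht : 0 < t) ↦
      ⟨(t / c) ^ p⁻¹, mem_Ioi.2 (by positivity), ?_⟩
    · rintro _ ⟨t, ht : 0 < t, rfl⟩
      exact mem_Ioi.2 (by positivity)
    · simp only [rpow_inv_rpow (by positivity : 0 ≤ t / c) hp.ne']
      field_simp
  have hderiv : ∀ t ∈ Ioi (0 : ℝ), HasDerivWithinAt (fun t ↦ c * t ^ p) (c * (p * t ^ (p - 1)))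
      (Ioi 0) t := fun t ht ↦
    ((hasDerivAt_rpow_const (.inl (ne_of_gt ht))).const_mul c).hasDerivWithinAt
  have hinj : InjOn (fun t : ℝ ↦ c * t ^ p) (Ioi 0) := fun t ht u hu h ↦
    (rpow_left_inj (le_of_lt ht) (le_of_lt hu) hp.ne').1 (mul_left_cancel₀ hc.ne' h)
  simp only [lintegral_rpowMeasure]
  rw [← lintegral_const_mul' _ _ ENNReal.ofReal_ne_top]
  nth_rw 1 [← himage]
  rw [lintegral_image_eq_lintegral_abs_deriv_mul measurableSet_Ioi hderiv hinj]
  refine setLIntegral_congr_fun measurableSet_Ioi fun t (ht : 0 < t) ↦ ?_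
  have hpow : c * (p * t ^ (p - 1)) * (c * t ^ p) ^ (s - 1) = p * c ^ s * t ^ (p * s - 1) := by
    rw [mul_rpow hc.le (by positivity), ← rpow_mul ht.le, rpow_sub_one hc.ne',
      show p * s - 1 = (p - 1) + p * (s - 1) by ring, rpow_add ht]
    field_simp
  rw [abs_of_pos (by positivity), ← mul_assoc, ← ENNReal.ofReal_mul (by positivity), hpow,
    ENNReal.ofReal_mul (by positivity), mul_assoc]

lemma lintegral_rpowMeasure_comp_mul_left {c : ℝ} (hc : 0 < c) (s : ℝ) (f : ℝ → ℝ≥0∞) :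
    ∫⁻ t, f t ∂rpowMeasure s = ENNReal.ofReal (c ^ s) * ∫⁻ t, f (c * t) ∂rpowMeasure s := by
  simpa using lintegral_rpowMeasure_comp_mul_rpow hc one_pos s f

lemma lintegral_exp_neg_mul_rpowMeasure {s c : ℝ} (hs : 0 < s) (hc : 0 < c) :
    ∫⁻ t, ENNReal.ofReal (exp (-(c * t))) ∂rpowMeasure s = ENNReal.ofReal (c ^ (-s) * Gamma s) := by
  have hint : ∫ t in Ioi 0, t ^ (s - 1) * exp (-(c * t)) = c ^ (-s) * Gamma s := by
    rw [integral_rpow_mul_exp_neg_mul_Ioi hs hc, one_div, inv_rpow hc.le, rpow_neg hc.le]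
  rw [lintegral_rpowMeasure, ← hint, ofReal_integral_eq_lintegral_ofReal]
  · refine setLIntegral_congr_fun measurableSet_Ioi fun t (ht : 0 < t) ↦ ?_
    rw [ENNReal.ofReal_mul (by positivity)]
  · refine not_imp_comm.1 integral_undef ?_
    have := Gamma_pos_of_pos hs
    rw [hint]
    positivity
  · exact (ae_restrict_mem measurableSet_Ioi).mono fun t (ht : 0 < t) ↦ by positivity

lemma lintegral_exp_neg_rpowMeasure {s : ℝ} (hs : 0 < s) :
    ∫⁻ t, ENNReal.ofReal (exp (-t)) ∂rpowMeasure s = ENNReal.ofReal (Gamma s) := by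
  simpa using lintegral_exp_neg_mul_rpowMeasure hs one_pos

lemma lintegral_comp_mul_left_rpowMeasure {c : ℝ} (hc : 0 < c) (s : ℝ) (f : ℝ → ℝ≥0∞) :
    ∫⁻ t, f (c * t) ∂rpowMeasure s = ENNReal.ofReal (c ^ (-s)) * ∫⁻ t, f t ∂rpowMeasure s := by
  rw [lintegral_rpowMeasure_comp_mul_left (inv_pos.2 hc)]
  simp [mul_inv_cancel_left₀ hc.ne', inv_rpow hc.le, rpow_neg hc.le]

lemma lintegral_lintegral_comp_add_rpowMeasure_eq_mul (a b : ℝ) {f : ℝ → ℝ≥0∞}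
    (hf : Measurable f) :
    ∫⁻ p, ∫⁻ q, f (p + q) ∂rpowMeasure b ∂rpowMeasure a =
      (∫⁻ v, ENNReal.ofReal ((1 + v) ^ (-(a + b))) ∂rpowMeasure b) *
        ∫⁻ t, f t ∂rpowMeasure (a + b) :=
  calc
    _ = ∫⁻ p, ∫⁻ v, ENNReal.ofReal (p ^ b) * f ((1 + v) * p) ∂rpowMeasure b ∂rpowMeasure a :=
      lintegral_rpowMeasure_congr fun p hp ↦ by
        rw [lintegral_rpowMeasure_comp_mul_left hp, lintegral_const_mul _ (by fun_prop)]
        ring_nf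
    _ = ∫⁻ v, ∫⁻ p, ENNReal.ofReal (p ^ b) * f ((1 + v) * p) ∂rpowMeasure a ∂rpowMeasure b :=
      lintegral_lintegral_swap (by fun_prop)
    _ = ∫⁻ v, ENNReal.ofReal ((1 + v) ^ (-(a + b))) * ∫⁻ t, f t ∂rpowMeasure (a + b)
          ∂rpowMeasure b :=
      lintegral_rpowMeasure_congr fun v hv ↦ by
        rw [lintegral_ofReal_rpow_mul_rpowMeasure,
          lintegral_comp_mul_left_rpowMeasure (by positivity)]
    _ = _ := lintegral_mul_const _ (by fun_prop)

lemma lintegral_lintegral_comp_add_rpowMeasure {a b : ℝ} (ha : 0 < a) (hb : 0 < b)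
    {f : ℝ → ℝ≥0∞} (hf : Measurable f) :
    ∫⁻ p, ∫⁻ q, f (p + q) ∂rpowMeasure b ∂rpowMeasure a =
      ENNReal.ofReal (beta a b) * ∫⁻ t, f t ∂rpowMeasure (a + b) := by
  have hΓ : 0 < Gamma (a + b) := Gamma_pos_of_pos (by positivity)
  have hexp : ∫⁻ p, ∫⁻ q, ENNReal.ofReal (exp (-(p + q))) ∂rpowMeasure b ∂rpowMeasure a =
      ENNReal.ofReal (Gamma a * Gamma b) := by
    simp only [neg_add, Real.exp_add, ENNReal.ofReal_mul (exp_nonneg _)]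
    rw [lintegral_lintegral_mul (by fun_prop) (by fun_prop), lintegral_exp_neg_rpowMeasure ha,
      lintegral_exp_neg_rpowMeasure hb, ENNReal.ofReal_mul (Gamma_pos_of_pos ha).le]
  rw [lintegral_lintegral_comp_add_rpowMeasure_eq_mul a b hf]
  rw [lintegral_lintegral_comp_add_rpowMeasure_eq_mul a b
    (f := fun t ↦ ENNReal.ofReal (exp (-t))) (by fun_prop),
    lintegral_exp_neg_rpowMeasure (by positivity)] at hexp
  rw [beta, ENNReal.ofReal_div_of_pos hΓ, ← hexp, ENNReal.mul_div_cancel_right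
    (by simpa using hΓ) ENNReal.ofReal_ne_top]

lemma lintegral_lintegral_mul_comp_mul_sq_rpowMeasure (m q : ℝ)
    {f g : ℝ → ℝ≥0∞} (hf : Measurable f) (hg : Measurable g) :
    ∫⁻ t, ∫⁻ k, f k * g (k * t ^ 2) ∂rpowMeasure m ∂rpowMeasure (2 * q) =
      2⁻¹ * (∫⁻ k, f k ∂rpowMeasure (m - q)) * ∫⁻ z, g z ∂rpowMeasure q := by
  -- The substitution `z = k * t ^ 2` decouples the two variables.
  have hscale {k : ℝ} (hk : 0 < k) : ∫⁻ t, g (k * t ^ 2) ∂rpowMeasure (2 * q) =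
      2⁻¹ * ENNReal.ofReal (k ^ (-q)) * ∫⁻ z, g z ∂rpowMeasure q := by
    rw [lintegral_rpowMeasure_comp_mul_rpow hk two_pos q g, ENNReal.ofReal_mul zero_le_two,
      rpow_neg hk.le, ENNReal.ofReal_inv_of_pos (by positivity)]
    simp only [rpow_ofNat, ENNReal.ofReal_ofNat]
    rw [← ENNReal.mul_inv (by simp) (by simp), ← mul_assoc, ENNReal.inv_mul_cancel, one_mul]
    · simpa using rpow_pos_of_pos hk q
    · finiteness
  rw [lintegral_lintegral_swap (by fun_prop)]
  calc
    _ = ∫⁻ k, ENNReal.ofReal (k ^ (-q)) * f k * (2⁻¹ * ∫⁻ z, g z ∂rpowMeasure q)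
          ∂rpowMeasure m :=
      lintegral_rpowMeasure_congr fun k hk ↦ by
        rw [lintegral_const_mul _ (by fun_prop), hscale hk]
        ring
    _ = _ := by
      rw [lintegral_mul_const _ (by fun_prop), lintegral_ofReal_rpow_mul_rpowMeasure,
        ← sub_eq_add_neg]
      ring

lemma lintegral_lintegral_mul_lintegral {α β δ : Type*} [MeasurableSpace α] [MeasurableSpace β]
    [MeasurableSpace δ] {μ : Measure α} {ν : Measure β} {κ : Measure δ} [SFinite μ] [SFinite ν]
    [SFinite κ] {f : δ → α → ℝ≥0∞} {g : δ → β → ℝ≥0∞} (hf : Measurable (Function.uncurry f))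
    (hg : Measurable (Function.uncurry g)) :
    ∫⁻ z, (∫⁻ p, f z p ∂μ) * (∫⁻ q, g z q ∂ν) ∂κ =
      ∫⁻ p, ∫⁻ q, ∫⁻ z, f z p * g z q ∂κ ∂ν ∂μ := by
  have hf' (z) : Measurable (f z) := hf.of_uncurry_left
  have hg' (z) : Measurable (g z) := hg.of_uncurry_left
  simp only [← lintegral_lintegral_mul (hf' _).aemeasurable (hg' _).aemeasurable]
  rw [lintegral_lintegral_swap]
  · exact lintegral_congr fun p ↦ lintegral_lintegral_swap (by fun_prop)
  · fun_prop

lemma lintegral_exp_neg_div_mul_exp_neg_div_rpowMeasure {s u v : ℝ} (hs : 0 < s) (hu : 0 < u)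
    (hv : 0 < v) :
    ∫⁻ z, ENNReal.ofReal (exp (-(z / u))) * ENNReal.ofReal (exp (-(z / v))) ∂rpowMeasure s =
      ENNReal.ofReal (u ^ s * (v ^ s * ((u + v) ^ (-s) * Gamma s))) := by
  have hsum (z : ℝ) : -(z / u) + -(z / v) = -((u + v) / (u * v) * z) := by
    field_simp
    ring
  simp only [← ENNReal.ofReal_mul (exp_nonneg _), ← Real.exp_add, hsum]
  rw [lintegral_exp_neg_mul_rpowMeasure hs (by positivity), div_rpow (by positivity)
    (by positivity), mul_rpow hu.le hv.le, rpow_neg hu.le, rpow_neg hv.le]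
  congr 1
  field_simp

/-! ### Mellin moments of products of Bessel functions -/

/-- The function `2 z ^ (b / 2) K_b(2 √z)` of `z`, with `K_b` the Macdonald function. -/
noncomputable def bessel (b z : ℝ) : ℝ≥0∞ :=
  ∫⁻ u, ENNReal.ofReal (exp (-u)) * ENNReal.ofReal (exp (-(z / u))) ∂rpowMeasure b

@[fun_prop]
lemma measurable_bessel (b : ℝ) : Measurable (bessel b) := by
  unfold bessel
  fun_prop

/-- The Mellin transform at `s` of the product of the functions `bessel b` and `bessel c`. -/
noncomputable def besselMoment (s b c : ℝ) : ℝ :=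
  Gamma s * Gamma (s + b) * Gamma (s + c) * Gamma (s + b + c) / Gamma (2 * s + b + c)

lemma besselMoment_comm (s b c : ℝ) : besselMoment s b c = besselMoment s c b := by
  simp only [besselMoment, add_right_comm _ b c, mul_right_comm (Gamma s) _ (Gamma (s + c))]

/-- The domain of absolute convergence of the integral computed by `besselMoment`. -/
structure BesselAdmissible (s b c : ℝ) : Prop where
  pos : 0 < s
  left : 0 < s + b
  right : 0 < s + c
  both : 0 < s + b + c

theorem lintegral_bessel_mul_bessel {s b c : ℝ} (h : BesselAdmissible s b c) :
    ∫⁻ z, bessel b z * bessel c z ∂rpowMeasure s = ENNReal.ofReal (besselMoment s b c) := by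
  obtain ⟨hs, hb, hc, hbc⟩ := h
  have hΓ : 0 < Gamma s := Gamma_pos_of_pos hs
  set F : ℝ → ℝ≥0∞ := fun w ↦ ENNReal.ofReal (w ^ (-s)) * ENNReal.ofReal (Gamma s * exp (-w))
  have hF : Measurable F := by fun_prop
  have hFint : ∫⁻ w, F w ∂rpowMeasure (s + b + (s + c)) =
      ENNReal.ofReal (Gamma s * Gamma (s + b + c)) := by
    simp only [F, lintegral_ofReal_rpow_mul_rpowMeasure, ENNReal.ofReal_mul hΓ.le]
    rw [lintegral_const_mul _ (by fun_prop), show s + b + (s + c) + -s = s + b + c by ring,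
      lintegral_exp_neg_rpowMeasure hbc]
  calc
    _ = ∫⁻ u, ENNReal.ofReal (u ^ s) * ∫⁻ v, ENNReal.ofReal (v ^ s) * F (u + v)
          ∂rpowMeasure c ∂rpowMeasure b := by
      simp only [bessel]
      rw [lintegral_lintegral_mul_lintegral (by fun_prop) (by fun_prop)]
      refine lintegral_rpowMeasure_congr fun u hu ↦ ?_
      rw [← lintegral_const_mul _ (by fun_prop)]
      refine lintegral_rpowMeasure_congr fun v hv ↦ ?_
      simp only [mul_mul_mul_comm (ENNReal.ofReal (exp (-u)))]
      rw [lintegral_const_mul _ (by fun_prop),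
        lintegral_exp_neg_div_mul_exp_neg_div_rpowMeasure hs hu hv]
      simp only [F]
      iterate 5 rw [← ENNReal.ofReal_mul (by positivity)]
      rw [neg_add, Real.exp_add]
      ring_nf
    _ = ENNReal.ofReal (beta (s + b) (s + c)) * ∫⁻ w, F w ∂rpowMeasure (s + b + (s + c)) := by
      simp only [lintegral_ofReal_rpow_mul_rpowMeasure]
      rw [add_comm b, add_comm c, lintegral_lintegral_comp_add_rpowMeasure hb hc hF]
    _ = _ := by
      rw [hFint, ← ENNReal.ofReal_mul (beta_pos hb hc).le, beta, besselMoment]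
      ring_nf

namespace BesselAdmissible

variable {s b c : ℝ}

lemma symm (h : BesselAdmissible s b c) : BesselAdmissible s c b :=
  ⟨h.pos, h.right, h.left, by linarith [h.both]⟩

lemma raise (h : BesselAdmissible s b c) : BesselAdmissible s (b + 1) c :=
  ⟨h.pos, by linarith [h.left], h.right, by linarith [h.both]⟩

lemma shift (h : BesselAdmissible s b c) : BesselAdmissible (s + 1) (b - 1) c :=
  ⟨by linarith [h.pos], by linarith [h.left], by linarith [h.right], by linarith [h.both]⟩

lemma shift_shift (h : BesselAdmissible s b c) :
    BesselAdmissible (s + 2) (b - 1) (c - 1) := by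
  simpa only [add_assoc, one_add_one_eq_two] using h.shift.symm.shift.symm

lemma besselMoment_pos (h : BesselAdmissible s b c) : 0 < besselMoment s b c := by
  have := Gamma_pos_of_pos h.pos
  have := Gamma_pos_of_pos h.left
  have := Gamma_pos_of_pos h.right
  have := Gamma_pos_of_pos h.both
  have : 0 < Gamma (2 * s + b + c) := Gamma_pos_of_pos (by linarith [h.left, h.right])
  unfold besselMoment
  positivity

lemma besselMoment_raise (h : BesselAdmissible s b c) :
    besselMoment s (b + 1) c =
      besselMoment s b c * ((s + b) * (s + b + c) / (2 * s + b + c)) := by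
  have hsum : 0 < 2 * s + b + c := by linarith [h.left, h.right]
  have := (Gamma_pos_of_pos hsum).ne'
  simp only [besselMoment, ← add_assoc s, ← add_assoc (2 * s), add_right_comm _ (1 : ℝ) c,
    Gamma_add_one h.left.ne', Gamma_add_one h.both.ne', Gamma_add_one hsum.ne']
  field_simp

lemma besselMoment_shift (h : BesselAdmissible s b c) :
    besselMoment (s + 1) (b - 1) c =
      besselMoment s b c * (s * (s + c) / (2 * s + b + c)) := by
  have hsum : 0 < 2 * s + b + c := by linarith [h.left, h.right]
  have := (Gamma_pos_of_pos hsum).ne'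
  rw [besselMoment, besselMoment, show s + 1 + (b - 1) = s + b by ring,
    show s + 1 + c = s + c + 1 by ring, show 2 * (s + 1) + (b - 1) + c = 2 * s + b + c + 1 by ring,
    Gamma_add_one h.pos.ne', Gamma_add_one h.right.ne', Gamma_add_one hsum.ne']
  field_simp

lemma besselMoment_shift_right (h : BesselAdmissible s b c) :
    besselMoment (s + 1) b (c - 1) = besselMoment s b c * (s * (s + b) / (2 * s + b + c)) := by
  rw [besselMoment_comm _ b, besselMoment_comm _ b, h.symm.besselMoment_shift, add_right_comm _ c]

lemma besselMoment_shift_shift (h : BesselAdmissible s b c) :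
    besselMoment (s + 2) (b - 1) (c - 1) = besselMoment s b c *
      (s * (s + 1) * (s + b) * (s + c) / ((2 * s + b + c) * (2 * s + b + c + 1))) := by
  have : 0 < 2 * s + b + c := by linarith [h.left, h.right]
  rw [show s + 2 = s + 1 + 1 by ring, h.shift.besselMoment_shift_right, h.besselMoment_shift,
    show 2 * (s + 1) + (b - 1) + c = 2 * s + b + c + 1 by ring]
  field_simp
  ring

end BesselAdmissible

/-! ### Gaussian mixtures and Laplace transforms -/

section GaussianMixture

variable (E : Type*) [NormedAddCommGroup E] [InnerProductSpace ℝ E]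

/-- Half the dimension of `E`, the exponent in the normalisation of Gaussians on `E`. -/
noncomputable def halfDim : ℝ := Module.finrank ℝ E / 2

lemma halfDim_pos [FiniteDimensional ℝ E] [Nontrivial E] : 0 < halfDim E := by
  have := Module.finrank_pos (R := ℝ) (M := E)
  unfold halfDim
  positivity

lemma nontrivial_of_halfDim_pos (h : 0 < halfDim E) : Nontrivial E := by
  refine Module.nontrivial_of_finrank_pos (R := ℝ) (Nat.pos_of_ne_zero fun h₀ ↦ ?_)
  simp [halfDim, h₀] at h

variable {E}

/-- The Gaussian `exp (-‖x‖ ^ 2 / T)`, normalised so that its mass does not depend on `T`. -/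
noncomputable def gaussianKernel (T : ℝ) (x : E) : ℝ≥0∞ :=
  ENNReal.ofReal (T ^ (-halfDim E) * exp (-(‖x‖ ^ 2 / T)))

lemma gaussianKernel_mul_gaussianKernel {S T : ℝ} (hS : 0 < S) (hT : 0 < T) (x : E) :
    gaussianKernel S x * gaussianKernel T x =
      ENNReal.ofReal ((S * T) ^ (-halfDim E)) *
        ENNReal.ofReal (exp (-((S + T) / (S * T)) * ‖x‖ ^ 2)) := by
  have hexp : -(‖x‖ ^ 2 / S) + -(‖x‖ ^ 2 / T) = -((S + T) / (S * T)) * ‖x‖ ^ 2 := by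
    field_simp
    ring
  rw [gaussianKernel, gaussianKernel, ← ENNReal.ofReal_mul (by positivity),
    ← ENNReal.ofReal_mul (by positivity), ← hexp, Real.exp_add, mul_rpow hS.le hT.le]
  ring_nf

lemma lintegral_exp_neg_mul_exp_neg_rpowMeasure {s S T : ℝ} (hs : 0 < s) (hS : 0 < S)
    (hT : 0 < T) :
    ∫⁻ k, ENNReal.ofReal (exp (-(k * S))) * ENNReal.ofReal (exp (-(k * T))) ∂rpowMeasure s =
      ENNReal.ofReal ((S + T) ^ (-s) * Gamma s) := by
  have hsum (k : ℝ) : -(k * S) + -(k * T) = -((S + T) * k) := by ring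
  simp only [← ENNReal.ofReal_mul (exp_nonneg _), ← Real.exp_add, hsum]
  exact lintegral_exp_neg_mul_rpowMeasure hs (by positivity)

variable [MeasurableSpace E] [BorelSpace E]

@[fun_prop]
lemma measurable_uncurry_gaussianKernel :
    Measurable (Function.uncurry (gaussianKernel : ℝ → E → ℝ≥0∞)) := by
  unfold gaussianKernel Function.uncurry
  fun_prop

variable [FiniteDimensional ℝ E]

lemma integrable_exp_neg_mul_sq_norm {b : ℝ} (hb : 0 < b) :
    Integrable fun x : E ↦ exp (-b * ‖x‖ ^ 2) := by
  refine not_imp_comm.1 integral_undef ?_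
  rw [GaussianFourier.integral_rexp_neg_mul_sq_norm hb]
  positivity

lemma integrable_inner_sq_mul_exp_neg_mul_sq_norm {b : ℝ} (hb : 0 < b) (v : E) :
    Integrable fun x : E ↦ ⟪v, x⟫ ^ 2 * exp (-b * ‖x‖ ^ 2) := by
  refine ((integrable_exp_neg_mul_sq_norm (half_pos hb)).const_mul (‖v‖ ^ 2 * (2 / b))).mono'
    (by fun_prop) (.of_forall fun x ↦ ?_)
  have hinner : ⟪v, x⟫ ^ 2 ≤ ‖v‖ ^ 2 * ‖x‖ ^ 2 := by
    rw [← mul_pow, sq_le_sq, abs_of_nonneg (by positivity : 0 ≤ ‖v‖ * ‖x‖)]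
    exact abs_real_inner_le_norm v x
  have hexp : ‖x‖ ^ 2 ≤ 2 / b * exp (b / 2 * ‖x‖ ^ 2) := by
    have := add_one_le_exp (b / 2 * ‖x‖ ^ 2)
    rw [div_mul_eq_mul_div, le_div_iff₀ hb]
    linarith
  have hsplit : exp (b / 2 * ‖x‖ ^ 2) * exp (-b * ‖x‖ ^ 2) = exp (-(b / 2) * ‖x‖ ^ 2) := by
    rw [← Real.exp_add]
    ring_nf
  rw [norm_of_nonneg (by positivity), ← hsplit, ← mul_assoc]
  gcongr
  calc ⟪v, x⟫ ^ 2 ≤ ‖v‖ ^ 2 * ‖x‖ ^ 2 := hinner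
    _ ≤ ‖v‖ ^ 2 * (2 / b * exp (b / 2 * ‖x‖ ^ 2)) := by gcongr
    _ = _ := by ring

lemma integral_inner_sq_mul_exp_neg_mul_sq_norm {b : ℝ} (hb : 0 < b) (v : E) :
    ∫ x : E, ⟪v, x⟫ ^ 2 * exp (-b * ‖x‖ ^ 2) =
      ‖v‖ ^ 2 * ((π / b) ^ halfDim E / (2 * b)) := by
  have hgauss (x : E) : HasFDerivAt (fun x : E ↦ exp (-b * ‖x‖ ^ 2))
      (exp (-b * ‖x‖ ^ 2) • (-b) • (2 • innerSL ℝ x)) x :=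
    ((hasStrictFDerivAt_norm_sq x).hasFDerivAt.const_mul (-b)).exp
  have hgauss_v (x : E) : fderiv ℝ (fun x : E ↦ exp (-b * ‖x‖ ^ 2)) x v =
      -(2 * b) * (⟪v, x⟫ * exp (-b * ‖x‖ ^ 2)) := by
    rw [(hgauss x).fderiv]
    simp [real_inner_comm v x]
    ring
  have hinner (x : E) : HasFDerivAt (fun x ↦ ⟪v, x⟫) (innerSL ℝ v) x := (innerSL ℝ v).hasFDerivAt
  have hinner_v (x : E) : fderiv ℝ (fun x ↦ ⟪v, x⟫) x v = ‖v‖ ^ 2 := by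
    simp [(hinner x).fderiv]
  have hint : Integrable fun x : E ↦ ⟪v, x⟫ * exp (-b * ‖x‖ ^ 2) := by
    refine ((integrable_exp_neg_mul_sq_norm hb).add
      (integrable_inner_sq_mul_exp_neg_mul_sq_norm hb v)).mono' (by fun_prop)
      (.of_forall fun x ↦ ?_)
    rw [norm_mul, Real.norm_eq_abs, norm_of_nonneg (exp_nonneg _), Pi.add_apply, ← one_add_mul]
    gcongr
    nlinarith [sq_abs ⟪v, x⟫, sq_nonneg (|⟪v, x⟫| - 1)]
  have hsq (x : E) : ⟪v, x⟫ * (-(2 * b) * (⟪v, x⟫ * exp (-b * ‖x‖ ^ 2))) =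
      -(2 * b) * (⟪v, x⟫ ^ 2 * exp (-b * ‖x‖ ^ 2)) := by
    ring
  have hparts := integral_mul_fderiv_eq_neg_fderiv_mul_of_integrable (μ := volume) (v := v)
    (f := fun x ↦ ⟪v, x⟫) (g := fun x ↦ exp (-b * ‖x‖ ^ 2))
    (by simpa only [hinner_v] using (integrable_exp_neg_mul_sq_norm hb).const_mul _)
    (by simpa only [hgauss_v, hsq] using
      (integrable_inner_sq_mul_exp_neg_mul_sq_norm hb v).const_mul (-(2 * b)))
    hint (fun x _ ↦ (hinner x).differentiableAt) (fun x _ ↦ (hgauss x).differentiableAt)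
  simp only [hgauss_v, hinner_v, hsq, integral_const_mul,
    GaussianFourier.integral_rexp_neg_mul_sq_norm hb] at hparts
  rw [mul_div_assoc', eq_div_iff (by positivity), halfDim]
  linarith

lemma lintegral_exp_neg_mul_sq_norm {b : ℝ} (hb : 0 < b) :
    ∫⁻ x : E, ENNReal.ofReal (exp (-b * ‖x‖ ^ 2)) = ENNReal.ofReal ((π / b) ^ halfDim E) := by
  rw [← ofReal_integral_eq_lintegral_ofReal (integrable_exp_neg_mul_sq_norm hb)
    (.of_forall fun x ↦ exp_nonneg _), GaussianFourier.integral_rexp_neg_mul_sq_norm hb, halfDim]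

lemma lintegral_inner_sq_mul_exp_neg_mul_sq_norm {b : ℝ} (hb : 0 < b) (v : E) :
    ∫⁻ x : E, ENNReal.ofReal (⟪v, x⟫ ^ 2) * ENNReal.ofReal (exp (-b * ‖x‖ ^ 2)) =
      ENNReal.ofReal (‖v‖ ^ 2 * ((π / b) ^ halfDim E / (2 * b))) := by
  simp only [← ENNReal.ofReal_mul (sq_nonneg _)]
  rw [← ofReal_integral_eq_lintegral_ofReal (integrable_inner_sq_mul_exp_neg_mul_sq_norm hb v)
    (.of_forall fun x ↦ by positivity), integral_inner_sq_mul_exp_neg_mul_sq_norm hb]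

lemma lintegral_gaussianKernel_mul_gaussianKernel [Nontrivial E] {S T : ℝ} (hS : 0 < S)
    (hT : 0 < T) :
    ∫⁻ x : E, gaussianKernel S x * gaussianKernel T x =
      ENNReal.ofReal (π ^ halfDim E / Gamma (halfDim E)) *
        ∫⁻ k, ENNReal.ofReal (exp (-(k * S))) * ENNReal.ofReal (exp (-(k * T)))
          ∂rpowMeasure (halfDim E) := by
  have hΓ := Gamma_pos_of_pos (halfDim_pos E)
  simp only [gaussianKernel_mul_gaussianKernel hS hT]
  rw [lintegral_exp_neg_mul_exp_neg_rpowMeasure (halfDim_pos E) hS hT,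
    lintegral_const_mul _ (by fun_prop), lintegral_exp_neg_mul_sq_norm (by positivity),
    ← ENNReal.ofReal_mul (by positivity), ← ENNReal.ofReal_mul (by positivity),
    div_div_eq_mul_div, div_rpow (by positivity) (by positivity), mul_rpow pi_nonneg
    (by positivity), rpow_neg (by positivity), rpow_neg (by positivity)]
  congr 1
  field_simp

lemma lintegral_inner_sq_mul_gaussianKernel_mul_gaussianKernel {S T : ℝ} (hS : 0 < S)
    (hT : 0 < T) (v : E) :
    ∫⁻ x : E, ENNReal.ofReal (⟪v, x⟫ ^ 2) * (gaussianKernel S x * gaussianKernel T x) =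
      ENNReal.ofReal (‖v‖ ^ 2 * (π ^ halfDim E / (2 * Gamma (halfDim E + 1)))) *
        ∫⁻ k, ENNReal.ofReal S * ENNReal.ofReal (exp (-(k * S))) *
          (ENNReal.ofReal T * ENNReal.ofReal (exp (-(k * T)))) ∂rpowMeasure (halfDim E + 1) := by
  have hd : 0 < halfDim E + 1 := by
    unfold halfDim
    positivity
  have := Gamma_pos_of_pos hd
  simp only [gaussianKernel_mul_gaussianKernel hS hT, mul_left_comm (ENNReal.ofReal (_ ^ 2)),
    mul_mul_mul_comm (ENNReal.ofReal S)]
  rw [lintegral_const_mul _ (by fun_prop), lintegral_const_mul _ (by fun_prop),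
    lintegral_inner_sq_mul_exp_neg_mul_sq_norm (by positivity),
    lintegral_exp_neg_mul_exp_neg_rpowMeasure hd hS hT]
  iterate 4 rw [← ENNReal.ofReal_mul (by positivity)]
  rw [div_div_eq_mul_div, div_rpow (by positivity) (by positivity),
    mul_rpow pi_nonneg (by positivity), rpow_neg (by positivity), rpow_neg (by positivity),
    rpow_add_one (by positivity)]
  congr 1
  field_simp

/-- The mixture of the Gaussians `gaussianKernel T` with weight `μ` on the parameter `T`. -/
noncomputable def gaussianMixture (μ : Measure ℝ) (x : E) : ℝ≥0∞ := ∫⁻ T, gaussianKernel T x ∂μ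

/-- The Laplace transform of a measure on the line. -/
noncomputable def laplace (μ : Measure ℝ) (k : ℝ) : ℝ≥0∞ := ∫⁻ T, ENNReal.ofReal (exp (-(k * T))) ∂μ

/-- Minus the derivative of the Laplace transform, for measures carried by `(0, ∞)`. -/
noncomputable def laplaceNegDeriv (μ : Measure ℝ) (k : ℝ) : ℝ≥0∞ :=
  ∫⁻ T, ENNReal.ofReal T * ENNReal.ofReal (exp (-(k * T))) ∂μ

theorem lintegral_gaussianMixture_mul_gaussianMixture [Nontrivial E] {μ ν : Measure ℝ} [SFinite μ]
    [SFinite ν] (hμ : ∀ᵐ T ∂μ, 0 < T) (hν : ∀ᵐ T ∂ν, 0 < T) :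
    ∫⁻ x : E, gaussianMixture μ x * gaussianMixture ν x =
      ENNReal.ofReal (π ^ halfDim E / Gamma (halfDim E)) *
        ∫⁻ k, laplace μ k * laplace ν k ∂rpowMeasure (halfDim E) := by
  simp only [gaussianMixture, laplace]
  rw [lintegral_lintegral_mul_lintegral (by fun_prop) (by fun_prop),
    lintegral_lintegral_mul_lintegral (by fun_prop) (by fun_prop)]
  simp only [← lintegral_const_mul' _ _ ENNReal.ofReal_ne_top]
  refine lintegral_congr_ae (hμ.mono fun S hS ↦ lintegral_congr_ae (hν.mono fun T hT ↦ ?_))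
  simpa only [lintegral_const_mul' _ _ ENNReal.ofReal_ne_top] using
    lintegral_gaussianKernel_mul_gaussianKernel (E := E) hS hT

theorem lintegral_inner_sq_mul_gaussianMixture_mul_gaussianMixture {μ ν : Measure ℝ} [SFinite μ]
    [SFinite ν] (hμ : ∀ᵐ T ∂μ, 0 < T) (hν : ∀ᵐ T ∂ν, 0 < T) (v : E) :
    ∫⁻ x : E, ENNReal.ofReal (⟪v, x⟫ ^ 2) * (gaussianMixture μ x * gaussianMixture ν x) =
      ENNReal.ofReal (‖v‖ ^ 2 * (π ^ halfDim E / (2 * Gamma (halfDim E + 1)))) *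
        ∫⁻ k, laplaceNegDeriv μ k * laplaceNegDeriv ν k ∂rpowMeasure (halfDim E + 1) := by
  simp only [gaussianMixture, laplaceNegDeriv, ← mul_assoc,
    ← lintegral_const_mul' (ENNReal.ofReal (⟪v, _⟫ ^ 2)) _ ENNReal.ofReal_ne_top]
  rw [lintegral_lintegral_mul_lintegral (by fun_prop) (by fun_prop),
    lintegral_lintegral_mul_lintegral (by fun_prop) (by fun_prop)]
  simp only [← lintegral_const_mul' _ _ ENNReal.ofReal_ne_top]
  refine lintegral_congr_ae (hμ.mono fun S hS ↦ lintegral_congr_ae (hν.mono fun T hT ↦ ?_))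
  simpa only [mul_assoc, lintegral_const_mul' _ _ ENNReal.ofReal_ne_top] using
    lintegral_inner_sq_mul_gaussianKernel_mul_gaussianKernel hS hT v

lemma lintegral_gaussianKernel_sub_mul_gaussianKernel {S T : ℝ} (hS : 0 < S) (hT : 0 < T)
    (x : E) :
    ∫⁻ ξ, gaussianKernel S (x - ξ) * gaussianKernel T ξ =
      ENNReal.ofReal (π ^ halfDim E) * gaussianKernel (S + T) x := by
  have hsquare (ξ : E) : -(‖x - ξ‖ ^ 2 / S) + -(‖ξ‖ ^ 2 / T) =
      -(‖x‖ ^ 2 / (S + T)) + -((S + T) / (S * T)) * ‖ξ - (T / (S + T)) • x‖ ^ 2 := by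
    rw [norm_sub_sq_real, norm_sub_sq_real, real_inner_smul_right, norm_smul, mul_pow, norm_div,
      norm_of_nonneg hT.le, norm_of_nonneg (by positivity : 0 ≤ S + T), real_inner_comm ξ x]
    field_simp
    ring
  have hmul (ξ : E) : gaussianKernel S (x - ξ) * gaussianKernel T ξ =
      ENNReal.ofReal ((S * T) ^ (-halfDim E) * exp (-(‖x‖ ^ 2 / (S + T)))) *
        ENNReal.ofReal (exp (-((S + T) / (S * T)) * ‖ξ - (T / (S + T)) • x‖ ^ 2)) := by
    rw [gaussianKernel, gaussianKernel, ← ENNReal.ofReal_mul (by positivity),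
      ← ENNReal.ofReal_mul (by positivity), mul_assoc ((S * T) ^ _), ← Real.exp_add, ← hsquare,
      Real.exp_add, mul_rpow hS.le hT.le]
    ring_nf
  simp only [hmul]
  rw [lintegral_const_mul _ (by fun_prop), lintegral_sub_right_eq_self
    (fun ξ : E ↦ ENNReal.ofReal (exp (-((S + T) / (S * T)) * ‖ξ‖ ^ 2))),
    lintegral_exp_neg_mul_sq_norm (by positivity), gaussianKernel,
    ← ENNReal.ofReal_mul (by positivity), ← ENNReal.ofReal_mul (by positivity),
    div_div_eq_mul_div, div_rpow (by positivity) (by positivity), mul_rpow pi_nonneg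
    (by positivity), rpow_neg (by positivity), rpow_neg (by positivity)]
  congr 1
  field_simp

theorem lintegral_gaussianMixture_sub_mul_gaussianMixture {μ ν : Measure ℝ} [SFinite μ]
    [SFinite ν] (hμ : ∀ᵐ T ∂μ, 0 < T) (hν : ∀ᵐ T ∂ν, 0 < T) (x : E) :
    ∫⁻ ξ, gaussianMixture μ (x - ξ) * gaussianMixture ν ξ =
      ENNReal.ofReal (π ^ halfDim E) * gaussianMixture (μ ∗ ν) x := by
  simp only [gaussianMixture]
  rw [lintegral_lintegral_mul_lintegral (by fun_prop) (by fun_prop),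
    Measure.lintegral_conv (by fun_prop)]
  simp only [← lintegral_const_mul' _ _ ENNReal.ofReal_ne_top]
  refine lintegral_congr_ae (hμ.mono fun S hS ↦ lintegral_congr_ae (hν.mono fun T hT ↦ ?_))
  exact lintegral_gaussianKernel_sub_mul_gaussianKernel hS hT x

end GaussianMixture

section Laplace

variable {μ ν : Measure ℝ} [SFinite ν]

lemma laplace_conv (k : ℝ) : laplace (μ ∗ ν) k = laplace μ k * laplace ν k := by
  simp only [laplace]
  rw [Measure.lintegral_conv (by fun_prop),
    ← lintegral_lintegral_mul (by fun_prop) (by fun_prop)]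
  simp only [mul_add, neg_add, Real.exp_add, ENNReal.ofReal_mul (exp_nonneg _)]

lemma laplaceNegDeriv_conv (hμ : ∀ᵐ T ∂μ, 0 < T) (hν : ∀ᵐ T ∂ν, 0 < T) (k : ℝ) :
    laplaceNegDeriv (μ ∗ ν) k =
      laplaceNegDeriv μ k * laplace ν k + laplace μ k * laplaceNegDeriv ν k := by
  simp only [laplaceNegDeriv, laplace]
  rw [Measure.lintegral_conv (by fun_prop),
    ← lintegral_lintegral_mul (by fun_prop) (by fun_prop),
    ← lintegral_lintegral_mul (by fun_prop) (by fun_prop), ← lintegral_add_left (by fun_prop)]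
  refine lintegral_congr_ae (hμ.mono fun S hS ↦ .trans ?_ (lintegral_add_left (by fun_prop) _))
  refine lintegral_congr_ae (hν.mono fun T hT ↦ ?_)
  simp only [mul_add, neg_add, Real.exp_add, ENNReal.ofReal_mul (exp_nonneg _),
    ENNReal.ofReal_add hS.le hT.le]
  ring

lemma ae_pos_conv (hμ : ∀ᵐ T ∂μ, 0 < T) (hν : ∀ᵐ T ∂ν, 0 < T) : ∀ᵐ T ∂(μ ∗ ν), 0 < T := by
  refine (ae_map_iff (by fun_prop) measurableSet_Ioi).2 ((Measure.ae_prod_iff_ae_ae ?_).2 ?_)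
  · exact measurableSet_lt measurable_const (by fun_prop)
  · exact hμ.mono fun S hS ↦ hν.mono fun T hT ↦ add_pos hS hT

end Laplace

lemma hasDerivAt_toReal_laplace {ν : Measure ℝ} (hν : ∀ᵐ T ∂ν, 0 < T)
    (hfin : ∀ k, 0 < k → laplace ν k ≠ ∞) {k : ℝ} (hk : 0 < k) :
    HasDerivAt (fun k ↦ (laplace ν k).toReal) (-(laplaceNegDeriv ν k).toReal) k := by
  have hmgf (k : ℝ) : (laplace ν k).toReal = mgf id ν (-k) := by
    rw [mgf, integral_eq_lintegral_of_nonneg_ae (.of_forall fun _ ↦ exp_nonneg _) (by fun_prop)]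
    simp [laplace]
  have hset : Iio 0 ⊆ integrableExpSet id ν := fun t ht ↦ by
    refine (lintegral_ofReal_ne_top_iff_integrable (by fun_prop)
      (.of_forall fun _ ↦ exp_nonneg _)).1 ?_
    simpa [laplace] using hfin (-t) (neg_pos.2 ht)
  have hderiv : ν[fun T ↦ id T * exp (-k * id T)] = (laplaceNegDeriv ν k).toReal := by
    rw [integral_eq_lintegral_of_nonneg_ae (hν.mono fun T hT ↦ by simp only [id]; positivity)
      (by fun_prop), laplaceNegDeriv]
    congr 1
    refine lintegral_congr_ae (hν.mono fun T hT ↦ ?_)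
    simp [ENNReal.ofReal_mul hT.le]
  have hmem : -k ∈ interior (integrableExpSet id ν) :=
    interior_maximal hset isOpen_Iio (neg_lt_zero.2 hk)
  simp only [hmgf, ← hderiv]
  simpa [Function.comp_def] using (hasDerivAt_mgf hmem).comp k (hasDerivAt_neg k)

/-! ### Inverse gamma laws -/

/-- The unnormalised inverse gamma law `c ^ α * t ^ (-α - 1) * exp (-c / t) dt` on `(0, ∞)`,
as the image under `u ↦ c / u` of the gamma law. -/
noncomputable def invGammaMeasure (α c : ℝ) : Measure ℝ :=
  ((rpowMeasure α).withDensity fun u ↦ ENNReal.ofReal (exp (-u))).map fun u ↦ c / u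

instance (α c : ℝ) : SFinite (invGammaMeasure α c) := by
  unfold invGammaMeasure
  infer_instance

lemma lintegral_invGammaMeasure (α c : ℝ) {f : ℝ → ℝ≥0∞} (hf : Measurable f) :
    ∫⁻ t, f t ∂invGammaMeasure α c =
      ∫⁻ u, ENNReal.ofReal (exp (-u)) * f (c / u) ∂rpowMeasure α := by
  rw [invGammaMeasure, lintegral_map hf (by fun_prop),
    lintegral_withDensity_eq_lintegral_mul_non_measurable _ (by fun_prop)
    (.of_forall fun _ ↦ ENNReal.ofReal_lt_top)]
  rfl

lemma ae_pos_invGammaMeasure (α : ℝ) {c : ℝ} (hc : 0 < c) : ∀ᵐ t ∂invGammaMeasure α c, 0 < t := by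
  refine (ae_map_iff (by fun_prop) measurableSet_Ioi).2 ?_
  exact (withDensity_absolutelyContinuous _ _).ae_le
    ((ae_pos_rpowMeasure α).mono fun u hu ↦ div_pos hc hu)

lemma invGammaMeasure_univ {α : ℝ} (hα : 0 < α) (c : ℝ) :
    invGammaMeasure α c univ = ENNReal.ofReal (Gamma α) := by
  simp [← lintegral_one, lintegral_invGammaMeasure α c measurable_const,
    lintegral_exp_neg_rpowMeasure hα]

lemma laplace_invGammaMeasure (α c k : ℝ) : laplace (invGammaMeasure α c) k = bessel α (k * c) := by
  rw [laplace, lintegral_invGammaMeasure α c (by fun_prop)]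
  simp only [bessel, mul_div_assoc]

lemma laplaceNegDeriv_invGammaMeasure (α : ℝ) {c : ℝ} (hc : 0 < c) (k : ℝ) :
    laplaceNegDeriv (invGammaMeasure α c) k = ENNReal.ofReal c * bessel (α - 1) (k * c) := by
  rw [laplaceNegDeriv, lintegral_invGammaMeasure α c (by fun_prop), bessel, sub_eq_add_neg,
    ← lintegral_ofReal_rpow_mul_rpowMeasure, ← lintegral_const_mul _ (by fun_prop)]
  refine lintegral_rpowMeasure_congr fun u _ ↦ ?_
  rw [div_eq_mul_inv, ENNReal.ofReal_mul hc.le, rpow_neg_one, mul_div_assoc, ← div_eq_mul_inv]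
  ring

lemma lintegral_invGammaMeasure_eq_laplace (α : ℝ) {c : ℝ} (hc : 0 < c) {h : ℝ → ℝ≥0∞}
    (hh : Measurable h) :
    ∫⁻ t, h t ∂invGammaMeasure α c =
      ENNReal.ofReal (c ^ α) * laplace ((rpowMeasure α).withDensity fun r ↦ h r⁻¹) c := by
  rw [lintegral_invGammaMeasure α c hh, lintegral_rpowMeasure_comp_mul_left hc, laplace,
    lintegral_withDensity_eq_lintegral_mul _ (by fun_prop) (by fun_prop)]
  simp only [Pi.mul_apply, div_mul_cancel_left₀ hc.ne', mul_comm (h _)]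

lemma lintegral_invGammaMeasure_add_one_eq_laplaceNegDeriv (α : ℝ) {c : ℝ} (hc : 0 < c)
    {h : ℝ → ℝ≥0∞} (hh : Measurable h) :
    ∫⁻ t, h t ∂invGammaMeasure (α + 1) c =
      ENNReal.ofReal (c ^ (α + 1)) *
        laplaceNegDeriv ((rpowMeasure α).withDensity fun r ↦ h r⁻¹) c := by
  rw [lintegral_invGammaMeasure_eq_laplace _ hc hh, laplace, laplaceNegDeriv,
    lintegral_withDensity_eq_lintegral_mul _ (by fun_prop) (by fun_prop),
    lintegral_withDensity_eq_lintegral_mul _ (by fun_prop) (by fun_prop),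
    ← lintegral_ofReal_rpow_mul_rpowMeasure]
  simp only [Pi.mul_apply, rpow_one, mul_left_comm (ENNReal.ofReal _)]

theorem hasDerivAt_toReal_lintegral_invGammaMeasure {α : ℝ} {h : ℝ → ℝ≥0∞} (hh : Measurable h)
    (hfin : ∀ c, 0 < c → ∫⁻ t, h t ∂invGammaMeasure α c ≠ ∞) {c : ℝ} (hc : 0 < c) :
    HasDerivAt (fun c ↦ (∫⁻ t, h t ∂invGammaMeasure α c).toReal)
      (c⁻¹ * (α * (∫⁻ t, h t ∂invGammaMeasure α c).toReal -
        (∫⁻ t, h t ∂invGammaMeasure (α + 1) c).toReal)) c := by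
  set ν := (rpowMeasure α).withDensity fun r ↦ h r⁻¹
  have hν : ∀ᵐ T ∂ν, 0 < T :=
    (withDensity_absolutelyContinuous _ _).ae_le (ae_pos_rpowMeasure α)
  have hlaplace (c : ℝ) (hc : 0 < c) : (∫⁻ t, h t ∂invGammaMeasure α c).toReal =
      c ^ α * (laplace ν c).toReal := by
    rw [lintegral_invGammaMeasure_eq_laplace α hc hh, ENNReal.toReal_mul,
      ENNReal.toReal_ofReal (by positivity)]
  have hnegDeriv : (∫⁻ t, h t ∂invGammaMeasure (α + 1) c).toReal =
      c ^ (α + 1) * (laplaceNegDeriv ν c).toReal := by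
    rw [lintegral_invGammaMeasure_add_one_eq_laplaceNegDeriv α hc hh, ENNReal.toReal_mul,
      ENNReal.toReal_ofReal (by positivity)]
  have hν_fin (c : ℝ) (hc : 0 < c) : laplace ν c ≠ ∞ := fun htop ↦ hfin c hc <| by
    rw [lintegral_invGammaMeasure_eq_laplace α hc hh, htop, ENNReal.mul_top]
    simpa using rpow_pos_of_pos hc α
  have hderiv := (hasDerivAt_rpow_const (p := α) (.inl hc.ne')).mul
    (hasDerivAt_toReal_laplace hν hν_fin hc)
  refine (hderiv.congr_of_eventuallyEq ?_).congr_deriv ?_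
  · filter_upwards [eventually_gt_nhds hc] with c hc using hlaplace c hc
  · rw [hlaplace c hc, hnegDeriv, rpow_sub_one hc.ne', rpow_add_one hc.ne']
    field_simp
    ring

section InvGammaMixture

variable {E : Type*} [NormedAddCommGroup E] [InnerProductSpace ℝ E]

lemma gaussianKernel_le_zero {S T : ℝ} (hST : S ≤ T) (hS : 0 < S) (x : E) :
    gaussianKernel T x ≤ gaussianKernel S (0 : E) := by
  have hT : 0 < T := hS.trans_le hST
  refine ENNReal.ofReal_le_ofReal (mul_le_mul ?_ ?_ (exp_nonneg _) (by positivity))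
  · exact rpow_le_rpow_of_nonpos hS hST (neg_nonpos.2 (by unfold halfDim; positivity))
  · simpa using (by positivity : 0 ≤ ‖x‖ ^ 2 / T)

variable [MeasurableSpace E] [BorelSpace E]

lemma gaussianMixture_invGammaMeasure {α c : ℝ} (hα : 0 < halfDim E + α) (hc : 0 < c) (x : E) :
    gaussianMixture (invGammaMeasure α c) x =
      ENNReal.ofReal (Gamma (halfDim E + α) * (c ^ α * (‖x‖ ^ 2 + c) ^ (-(halfDim E + α)))) := by
  have hkernel {u : ℝ} (hu : 0 < u) :
      ENNReal.ofReal (exp (-u)) * gaussianKernel (c / u) x =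
        ENNReal.ofReal (c ^ (-halfDim E)) * (ENNReal.ofReal (u ^ halfDim E) *
          ENNReal.ofReal (exp (-((‖x‖ ^ 2 + c) / c * u)))) := by
    have hexp : -u + -(‖x‖ ^ 2 / (c / u)) = -((‖x‖ ^ 2 + c) / c * u) := by
      field_simp
      ring
    rw [gaussianKernel, ← hexp, Real.exp_add, div_rpow hc.le hu.le, rpow_neg hu.le]
    iterate 3 rw [← ENNReal.ofReal_mul (by positivity)]
    congr 1
    field_simp
  rw [gaussianMixture, lintegral_invGammaMeasure _ _ (by fun_prop),
    lintegral_rpowMeasure_congr fun u hu ↦ hkernel hu, lintegral_const_mul _ (by fun_prop),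
    lintegral_ofReal_rpow_mul_rpowMeasure, add_comm α,
    lintegral_exp_neg_mul_rpowMeasure hα (by positivity), ← ENNReal.ofReal_mul (by positivity),
    div_rpow (by positivity) hc.le, rpow_neg hc.le, rpow_neg hc.le, rpow_add hc]
  congr 1
  field_simp

/-- The mixture of Gaussians in the parameter `S + T`, where `S` and `T` are independent with
inverse gamma laws of shapes `α`, `β` and scales `c`, `1`. -/
noncomputable def invGammaMixture (α β c : ℝ) (x : E) : ℝ≥0∞ :=
  gaussianMixture (invGammaMeasure α c ∗ invGammaMeasure β 1) x

lemma invGammaMixture_eq_lintegral (α β c : ℝ) (x : E) :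
    invGammaMixture α β c x =
      ∫⁻ S, ∫⁻ T, gaussianKernel (S + T) x ∂invGammaMeasure β 1 ∂invGammaMeasure α c :=
  Measure.lintegral_conv (by fun_prop)

@[fun_prop]
lemma measurable_uncurry_invGammaMixture (α β : ℝ) :
    Measurable (Function.uncurry (invGammaMixture α β : ℝ → E → ℝ≥0∞)) := by
  have hdensity : Function.uncurry (invGammaMixture α β : ℝ → E → ℝ≥0∞) = fun p ↦
      ∫⁻ u, ENNReal.ofReal (exp (-u)) *
        ∫⁻ T, gaussianKernel (p.1 / u + T) p.2 ∂invGammaMeasure β 1 ∂rpowMeasure α := by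
    funext p
    rw [Function.uncurry, invGammaMixture_eq_lintegral,
      lintegral_invGammaMeasure _ _ (by fun_prop)]
  rw [hdensity]
  fun_prop

lemma invGammaMixture_ne_top {α β c : ℝ} (hα : 0 < α) (hβ : 0 < halfDim E + β) (hc : 0 < c)
    (x : E) : invGammaMixture α β c x ≠ ∞ := by
  have hbound : invGammaMixture α β c x ≤
      ∫⁻ _, gaussianMixture (invGammaMeasure β 1) (0 : E) ∂invGammaMeasure α c := by
    rw [invGammaMixture_eq_lintegral]
    refine lintegral_mono_ae ((ae_pos_invGammaMeasure α hc).mono fun S hS ↦ ?_)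
    refine lintegral_mono_ae ((ae_pos_invGammaMeasure β one_pos).mono fun T hT ↦ ?_)
    exact gaussianKernel_le_zero (by linarith) hT x
  refine ne_top_of_le_ne_top ?_ hbound
  rw [lintegral_const, gaussianMixture_invGammaMeasure hβ one_pos, invGammaMeasure_univ hα]
  finiteness

lemma hasDerivAt_toReal_invGammaMixture {α β c : ℝ} (hα : 0 < α) (hβ : 0 < halfDim E + β)
    (hc : 0 < c) (x : E) :
    HasDerivAt (fun c ↦ (invGammaMixture α β c x).toReal)
      (c⁻¹ * (α * (invGammaMixture α β c x).toReal -
        (invGammaMixture (α + 1) β c x).toReal)) c := by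
  simp only [invGammaMixture_eq_lintegral]
  refine hasDerivAt_toReal_lintegral_invGammaMeasure (by fun_prop) (fun c hc ↦ ?_) hc
  simpa only [invGammaMixture_eq_lintegral] using invGammaMixture_ne_top hα hβ hc x

lemma laplace_invGammaMeasure_conv (α β c k : ℝ) :
    laplace (invGammaMeasure α c ∗ invGammaMeasure β 1) k = bessel α (k * c) * bessel β k := by
  rw [laplace_conv, laplace_invGammaMeasure, laplace_invGammaMeasure, mul_one]

lemma laplaceNegDeriv_invGammaMeasure_conv (α β : ℝ) {c : ℝ} (hc : 0 < c) (k : ℝ) :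
    laplaceNegDeriv (invGammaMeasure α c ∗ invGammaMeasure β 1) k =
      ENNReal.ofReal c * bessel (α - 1) (k * c) * bessel β k +
        bessel α (k * c) * bessel (β - 1) k := by
  rw [laplaceNegDeriv_conv (ae_pos_invGammaMeasure α hc) (ae_pos_invGammaMeasure β one_pos),
    laplaceNegDeriv_invGammaMeasure α hc, laplaceNegDeriv_invGammaMeasure β one_pos,
    laplace_invGammaMeasure, laplace_invGammaMeasure, mul_one, ENNReal.ofReal_one, one_mul]

end InvGammaMixture

lemma lintegral_lintegral_sq_pow_mul_bessel {q s m : ℝ} (j : ℕ) {α α' β β' : ℝ} (hm : q + j + s = m)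
    (hα : BesselAdmissible (q + j) α α') (hβ : BesselAdmissible s β β') :
    ∫⁻ y, ∫⁻ k, ENNReal.ofReal (y ^ 2) ^ j *
        ((bessel β k * bessel β' k) * (bessel α (k * y ^ 2) * bessel α' (k * y ^ 2)))
        ∂rpowMeasure m ∂rpowMeasure (2 * q) =
      ENNReal.ofReal (2⁻¹ * (besselMoment (q + j) α α' * besselMoment s β β')) := by
  calc
    _ = ∫⁻ y, ∫⁻ k, (bessel β k * bessel β' k) * (bessel α (k * y ^ 2) * bessel α' (k * y ^ 2))
          ∂rpowMeasure m ∂rpowMeasure (2 * (q + j)) := by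
      rw [mul_add, ← lintegral_ofReal_rpow_mul_rpowMeasure]
      refine lintegral_rpowMeasure_congr fun y _ ↦ ?_
      rw [lintegral_const_mul _ (by fun_prop), ← ENNReal.ofReal_pow (sq_nonneg y), ← pow_mul,
        ← rpow_natCast]
      push_cast
      rfl
    _ = _ := by
      rw [lintegral_lintegral_mul_comp_mul_sq_rpowMeasure m (q + j)
        (f := fun k ↦ bessel β k * bessel β' k) (g := fun z ↦ bessel α z * bessel α' z)
        (by fun_prop) (by fun_prop), lintegral_bessel_mul_bessel hα, ← hm, add_sub_cancel_left,
        lintegral_bessel_mul_bessel hβ, mul_right_comm, ENNReal.ofReal_mul (by positivity),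
        ENNReal.ofReal_mul hα.besselMoment_pos.le, ENNReal.ofReal_inv_of_pos two_pos,
        ENNReal.ofReal_ofNat, mul_assoc]

section LaplacePairing

variable {q r α α' β β' : ℝ}

lemma lintegral_lintegral_laplace_mul_laplace (hα : BesselAdmissible q α α')
    (hβ : BesselAdmissible r β β') :
    ∫⁻ y, ∫⁻ k, laplace (invGammaMeasure α (y ^ 2) ∗ invGammaMeasure β 1) k *
        laplace (invGammaMeasure α' (y ^ 2) ∗ invGammaMeasure β' 1) k
        ∂rpowMeasure (q + r) ∂rpowMeasure (2 * q) =
      ENNReal.ofReal (2⁻¹ * (besselMoment q α α' * besselMoment r β β')) := by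
  have hbessel := lintegral_lintegral_sq_pow_mul_bessel (q := q) (m := q + r) 0 (by simp)
    (by simpa using hα) hβ
  simp only [Nat.cast_zero, add_zero, pow_zero, one_mul] at hbessel
  rw [← hbessel]
  refine lintegral_congr fun y ↦ lintegral_congr fun k ↦ ?_
  rw [laplace_invGammaMeasure_conv, laplace_invGammaMeasure_conv]
  ring

/-- Twice the analogue of the integral in `lintegral_lintegral_laplace_mul_laplace` for the
derivatives of the Laplace transforms. -/
noncomputable def laplaceDerivMoment (q r α α' β β' : ℝ) : ℝ :=
  besselMoment (q + 2) (α - 1) (α' - 1) * besselMoment r β β' +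
    besselMoment (q + 1) (α - 1) α' * besselMoment (r + 1) β (β' - 1) +
    besselMoment (q + 1) α (α' - 1) * besselMoment (r + 1) (β - 1) β' +
    besselMoment q α α' * besselMoment (r + 2) (β - 1) (β' - 1)

lemma laplaceDerivMoment_pos (hα : BesselAdmissible q α α') (hβ : BesselAdmissible r β β') :
    0 < laplaceDerivMoment q r α α' β β' := by
  have := hα.besselMoment_pos
  have := hα.shift.besselMoment_pos
  have := hα.symm.shift.symm.besselMoment_pos
  have := hα.shift_shift.besselMoment_pos
  have := hβ.besselMoment_pos
  have := hβ.shift.besselMoment_pos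
  have := hβ.symm.shift.symm.besselMoment_pos
  have := hβ.shift_shift.besselMoment_pos
  unfold laplaceDerivMoment
  positivity

lemma laplaceDerivMoment_eq (hα : BesselAdmissible q α α')
    (hβ : BesselAdmissible r β β') :
    laplaceDerivMoment q r α α' β β' = besselMoment q α α' * besselMoment r β β' *
      (q * (q + 1) * (q + α) * (q + α') / ((2 * q + α + α') * (2 * q + α + α' + 1)) +
        q * (q + α') / (2 * q + α + α') * (r * (r + β) / (2 * r + β + β')) +
        q * (q + α) / (2 * q + α + α') * (r * (r + β') / (2 * r + β + β')) +
        r * (r + 1) * (r + β) * (r + β') / ((2 * r + β + β') * (2 * r + β + β' + 1))) := by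
  rw [laplaceDerivMoment, hα.besselMoment_shift_shift, hα.besselMoment_shift,
    hα.besselMoment_shift_right, hβ.besselMoment_shift_shift, hβ.besselMoment_shift,
    hβ.besselMoment_shift_right]
  ring

lemma lintegral_lintegral_laplaceNegDeriv_mul_laplaceNegDeriv (hα : BesselAdmissible q α α')
    (hβ : BesselAdmissible r β β') :
    ∫⁻ y, ∫⁻ k, laplaceNegDeriv (invGammaMeasure α (y ^ 2) ∗ invGammaMeasure β 1) k *
        laplaceNegDeriv (invGammaMeasure α' (y ^ 2) ∗ invGammaMeasure β' 1) k
        ∂rpowMeasure (q + r + 2) ∂rpowMeasure (2 * q) =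
      ENNReal.ofReal (2⁻¹ * laplaceDerivMoment q r α α' β β') := by
  have h₂ := lintegral_lintegral_sq_pow_mul_bessel (q := q) (m := q + r + 2) 2
    (by push_cast; ring) (by simpa using hα.shift_shift) hβ
  have h₁ := lintegral_lintegral_sq_pow_mul_bessel (q := q) (m := q + r + 2) 1
    (by push_cast; ring) (by simpa using hα.shift) hβ.symm.shift.symm
  have h₁' := lintegral_lintegral_sq_pow_mul_bessel (q := q) (m := q + r + 2) 1
    (by push_cast; ring) (by simpa using hα.symm.shift.symm) hβ.shift
  have h₀ := lintegral_lintegral_sq_pow_mul_bessel (q := q) (m := q + r + 2) 0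
    (by push_cast; ring) (by simpa using hα) hβ.shift_shift
  simp only [Nat.cast_ofNat, Nat.cast_one, Nat.cast_zero, add_zero, pow_one, pow_zero,
    one_mul] at h₂ h₁ h₁' h₀
  have := hα.besselMoment_pos
  have := hα.shift.besselMoment_pos
  have := hα.symm.shift.symm.besselMoment_pos
  have := hα.shift_shift.besselMoment_pos
  have := hβ.besselMoment_pos
  have := hβ.shift.besselMoment_pos
  have := hβ.symm.shift.symm.besselMoment_pos
  have := hβ.shift_shift.besselMoment_pos
  simp only [laplaceDerivMoment, mul_add (2⁻¹ : ℝ)]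
  iterate 3 rw [ENNReal.ofReal_add (by positivity) (by positivity)]
  rw [← h₂, ← h₁, ← h₁', ← h₀]
  iterate 3 rw [← lintegral_add_left (by fun_prop)]
  refine lintegral_rpowMeasure_congr fun y hy ↦ ?_
  iterate 3 rw [← lintegral_add_left (by fun_prop)]
  refine lintegral_congr fun k ↦ ?_
  simp only [laplaceNegDeriv_invGammaMeasure_conv _ _ (pow_pos hy 2)]
  ring

end LaplacePairing

lemma ae_pos_invGammaMeasure_conv (α β : ℝ) {c : ℝ} (hc : 0 < c) :
    ∀ᵐ t ∂(invGammaMeasure α c ∗ invGammaMeasure β 1), 0 < t :=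
  ae_pos_conv (ae_pos_invGammaMeasure α hc) (ae_pos_invGammaMeasure β one_pos)

section Pairing

variable {E : Type*} [NormedAddCommGroup E] [InnerProductSpace ℝ E] [MeasurableSpace E]
  [BorelSpace E] [FiniteDimensional ℝ E] {q r α α' β β' : ℝ}

theorem lintegral_lintegral_invGammaMixture_mul [Nontrivial E] (hα : BesselAdmissible q α α')
    (hβ : BesselAdmissible r β β') (hqr : q + r = halfDim E) :
    ∫⁻ y, ∫⁻ x : E, invGammaMixture α β (y ^ 2) x * invGammaMixture α' β' (y ^ 2) x
        ∂volume ∂rpowMeasure (2 * q) =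
      ENNReal.ofReal (π ^ halfDim E / Gamma (halfDim E) *
        (2⁻¹ * (besselMoment q α α' * besselMoment r β β'))) := by
  have hΓ := Gamma_pos_of_pos (halfDim_pos E)
  rw [ENNReal.ofReal_mul (by positivity), ← lintegral_lintegral_laplace_mul_laplace hα hβ, hqr,
    ← lintegral_const_mul' _ _ ENNReal.ofReal_ne_top]
  exact lintegral_rpowMeasure_congr fun y hy ↦ lintegral_gaussianMixture_mul_gaussianMixture
    (ae_pos_invGammaMeasure_conv α β (pow_pos hy 2))
    (ae_pos_invGammaMeasure_conv α' β' (pow_pos hy 2))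

theorem lintegral_lintegral_inner_sq_mul_invGammaMixture_mul (hα : BesselAdmissible q α α')
    (hβ : BesselAdmissible r β β') (hqr : q + r + 1 = halfDim E) (v : E) :
    ∫⁻ y, ∫⁻ x : E, ENNReal.ofReal (⟪v, x⟫ ^ 2) *
        (invGammaMixture α β (y ^ 2) x * invGammaMixture α' β' (y ^ 2) x)
        ∂volume ∂rpowMeasure (2 * q) =
      ENNReal.ofReal (‖v‖ ^ 2 * (π ^ halfDim E / (2 * Gamma (halfDim E + 1))) *
        (2⁻¹ * laplaceDerivMoment q r α α' β β')) := by
  have hΓ : 0 < Gamma (halfDim E + 1) := Gamma_pos_of_pos (by unfold halfDim; positivity)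
  rw [ENNReal.ofReal_mul (by positivity),
    ← lintegral_lintegral_laplaceNegDeriv_mul_laplaceNegDeriv hα hβ,
    show q + r + 2 = halfDim E + 1 by linarith,
    ← lintegral_const_mul' _ _ ENNReal.ofReal_ne_top]
  exact lintegral_rpowMeasure_congr fun y hy ↦
    lintegral_inner_sq_mul_gaussianMixture_mul_gaussianMixture
      (ae_pos_invGammaMeasure_conv α β (pow_pos hy 2))
      (ae_pos_invGammaMeasure_conv α' β' (pow_pos hy 2)) v

end Pairing

section ToReal

variable {X Y : Type*} [MeasurableSpace X] [MeasurableSpace Y] {μ : Measure X} {ν : Measure Y}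
  [SFinite ν] {F : X → Y → ℝ≥0∞}

lemma integrable_toReal_of_lintegral_lintegral_ne_top (hF : Measurable (Function.uncurry F))
    (hfin : ∫⁻ x, ∫⁻ y, F x y ∂ν ∂μ ≠ ∞) :
    Integrable (fun p : X × Y ↦ (F p.1 p.2).toReal) (μ.prod ν) :=
  integrable_toReal_of_lintegral_ne_top hF.aemeasurable
    ((lintegral_prod _ hF.aemeasurable).trans_ne hfin)

lemma integral_toReal_prod (hF : Measurable (Function.uncurry F))
    (hfin : ∫⁻ x, ∫⁻ y, F x y ∂ν ∂μ ≠ ∞) :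
    ∫ p, (F p.1 p.2).toReal ∂μ.prod ν = (∫⁻ x, ∫⁻ y, F x y ∂ν ∂μ).toReal := by
  have hprod : ∫⁻ p, F p.1 p.2 ∂μ.prod ν = ∫⁻ x, ∫⁻ y, F x y ∂ν ∂μ :=
    lintegral_prod _ hF.aemeasurable
  rw [← hprod]
  exact integral_toReal hF.aemeasurable (ae_lt_top hF (hprod.trans_ne hfin))

end ToReal

/-! ### The bubble extension and its weighted norms -/

section BubbleExtension

variable {E : Type*} [NormedAddCommGroup E] [InnerProductSpace ℝ E] [MeasurableSpace E]
  [BorelSpace E] [FiniteDimensional ℝ E]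

theorem integral_rpow_mul_rpow_eq_toReal_invGammaMixture {α β c : ℝ} (hα : 0 < halfDim E + α)
    (hβ : 0 < halfDim E + β) (hc : 0 < c) (x : E) :
    ∫ ξ : E, c ^ α * (‖x - ξ‖ ^ 2 + c) ^ (-(halfDim E + α)) *
        (1 + ‖ξ‖ ^ 2) ^ (-(halfDim E + β)) =
      π ^ halfDim E / (Gamma (halfDim E + α) * Gamma (halfDim E + β)) *
        (invGammaMixture α β c x).toReal := by
  have := Gamma_pos_of_pos hα
  have := Gamma_pos_of_pos hβ
  have hmul (ξ : E) : ENNReal.ofReal (c ^ α * (‖x - ξ‖ ^ 2 + c) ^ (-(halfDim E + α)) *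
      (1 + ‖ξ‖ ^ 2) ^ (-(halfDim E + β))) =
      ENNReal.ofReal (Gamma (halfDim E + α) * Gamma (halfDim E + β))⁻¹ *
        (gaussianMixture (invGammaMeasure α c) (x - ξ) *
          gaussianMixture (invGammaMeasure β 1) ξ) := by
    rw [gaussianMixture_invGammaMeasure hα hc, gaussianMixture_invGammaMeasure hβ one_pos,
      ← ENNReal.ofReal_mul (by positivity), ← ENNReal.ofReal_mul (by positivity), one_rpow,
      add_comm (‖ξ‖ ^ 2)]
    congr 1
    field_simp
  rw [integral_eq_lintegral_of_nonneg_ae (.of_forall fun ξ ↦ by positivity) (by fun_prop)]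
  simp only [hmul]
  rw [lintegral_const_mul' _ _ ENNReal.ofReal_ne_top,
    lintegral_gaussianMixture_sub_mul_gaussianMixture (ae_pos_invGammaMeasure α hc)
      (ae_pos_invGammaMeasure β one_pos), ← invGammaMixture, ← mul_assoc,
    ← ENNReal.ofReal_mul (by positivity), ENNReal.toReal_mul,
    ENNReal.toReal_ofReal (by positivity), inv_mul_eq_div]

/-- The Caffarelli–Silvestre extension `y ^ (2γ) (|x| ^ 2 + y ^ 2) ^ (-(n + 2γ) / 2) ∗ w` of the
bubble `w = (1 + |x| ^ 2) ^ (-(n - 2γ) / 2)`, with `n = dim E` and without the normalising constant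
of the Poisson kernel. -/
noncomputable def bubbleExtension (γ : ℝ) (x : E) (y : ℝ) : ℝ :=
  ∫ ξ : E, y ^ (2 * γ) * (‖x - ξ‖ ^ 2 + y ^ 2) ^ (-(halfDim E + γ)) *
    (1 + ‖ξ‖ ^ 2) ^ (-(halfDim E - γ))

variable (E) in
/-- The factor between `bubbleExtension` and the mixture of Gaussians that it is equal to. -/
noncomputable def bubbleConst (γ : ℝ) : ℝ :=
  π ^ halfDim E / (Gamma (halfDim E + γ) * Gamma (halfDim E - γ))

variable {γ : ℝ}

lemma bubbleExtension_eq (hγ : 0 < γ) (hd : γ < halfDim E) {y : ℝ} (hy : 0 < y) (x : E) :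
    bubbleExtension γ x y = bubbleConst E γ * (invGammaMixture γ (-γ) (y ^ 2) x).toReal := by
  rw [bubbleConst, sub_eq_add_neg, ← integral_rpow_mul_rpow_eq_toReal_invGammaMixture
    (by linarith) (by linarith) (pow_pos hy 2), ← rpow_natCast_mul hy.le]
  rfl

lemma deriv_bubbleExtension (hγ : 0 < γ) (hd : γ < halfDim E) {y : ℝ} (hy : 0 < y) (x : E) :
    deriv (bubbleExtension γ x) y = 2 * bubbleConst E γ * y⁻¹ *
      (γ * (invGammaMixture γ (-γ) (y ^ 2) x).toReal -
        (invGammaMixture (γ + 1) (-γ) (y ^ 2) x).toReal) := by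
  have hchain := ((hasDerivAt_toReal_invGammaMixture (β := -γ) hγ (by linarith) (pow_pos hy 2)
    x).comp (h := (· ^ 2)) y (hasDerivAt_pow 2 y)).const_mul (bubbleConst E γ)
  have heq : bubbleExtension γ x =ᶠ[𝓝 y]
      fun y ↦ bubbleConst E γ * (invGammaMixture γ (-γ) (y ^ 2) x).toReal := by
    filter_upwards [eventually_gt_nhds hy] with y hy using bubbleExtension_eq hγ hd hy x
  rw [(hchain.congr_of_eventuallyEq heq).deriv]
  field_simp
  norm_num
  ring

end BubbleExtension

lemma besselAdmissible_one_sub {γ : ℝ} (hγ : 0 < γ) (hγ₁ : γ < 1) :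
    BesselAdmissible (1 - γ) γ γ := by
  constructor <;> linarith

lemma besselAdmissible_sub_two_add {γ h : ℝ} (hγ : 0 < γ) (hh : 2 + γ < h) :
    BesselAdmissible (h - 2 + γ) (-γ) (-γ) := by
  constructor <;> linarith

section WeightedNorms

variable {E : Type*} [NormedAddCommGroup E] [InnerProductSpace ℝ E]

variable [MeasurableSpace E] [BorelSpace E] [FiniteDimensional ℝ E] {γ : ℝ}

lemma setIntegral_rpow_mul_integral (s : ℝ) {f : ℝ → E → ℝ}
    (hf : Integrable (Function.uncurry f) ((rpowMeasure s).prod volume)) :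
    ∫ y in Ioi 0, y ^ (s - 1) * ∫ x, f y x = ∫ p : ℝ × E, f p.1 p.2 ∂(rpowMeasure s).prod volume :=
  (integral_rpowMeasure s _).symm.trans (integral_prod _ hf).symm

theorem integral_integral_bubbleExtension_sq (hγ : 0 < γ) (hγ₂ : γ < 2)
    (hd : 2 + γ < halfDim E) :
    ∫ y in Ioi (0 : ℝ), ∫ x : E, y ^ (3 - 2 * γ) * bubbleExtension γ x y ^ 2 =
      bubbleConst E γ ^ 2 * (π ^ halfDim E / Gamma (halfDim E) *
        (2⁻¹ * (besselMoment (2 - γ) γ γ * besselMoment (halfDim E - 2 + γ) (-γ) (-γ)))) := by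
  have := nontrivial_of_halfDim_pos E (by linarith)
  have hα : BesselAdmissible (2 - γ) γ γ := by constructor <;> linarith
  have hβ := besselAdmissible_sub_two_add hγ hd
  have hΓ := Gamma_pos_of_pos (halfDim_pos E)
  have := hα.besselMoment_pos
  have := hβ.besselMoment_pos
  set W : ℝ → E → ℝ≥0∞ := fun y x ↦
    invGammaMixture γ (-γ) (y ^ 2) x * invGammaMixture γ (-γ) (y ^ 2) x
  have hW : Measurable (Function.uncurry W) := by fun_prop
  have hpair := lintegral_lintegral_invGammaMixture_mul (E := E) hα hβ (by ring)
  have hfin := hpair ▸ ENNReal.ofReal_ne_top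
  have hint := integrable_toReal_of_lintegral_lintegral_ne_top hW hfin
  calc
    _ = ∫ y in Ioi (0 : ℝ), y ^ (2 * (2 - γ) - 1) *
          ∫ x : E, bubbleConst E γ ^ 2 * (W y x).toReal := by
      refine setIntegral_congr_fun measurableSet_Ioi fun y hy ↦ ?_
      simp only [← integral_const_mul, bubbleExtension_eq hγ (by linarith) hy, W,
        ENNReal.toReal_mul]
      ring_nf
    _ = bubbleConst E γ ^ 2 *
          ∫ p : ℝ × E, (W p.1 p.2).toReal ∂(rpowMeasure (2 * (2 - γ))).prod volume := by
      rw [setIntegral_rpow_mul_integral _ (hint.const_mul _), integral_const_mul]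
    _ = _ := by
      rw [integral_toReal_prod hW hfin, hpair, ENNReal.toReal_ofReal (by positivity)]

lemma integrable_inner_sq_mul_invGammaMixture_mul {q r α α' β β' : ℝ}
    (hα : BesselAdmissible q α α') (hβ : BesselAdmissible r β β') (hqr : q + r + 1 = halfDim E)
    (v : E) :
    Integrable (fun p : ℝ × E ↦ ⟪v, p.2⟫ ^ 2 * ((invGammaMixture α β (p.1 ^ 2) p.2).toReal *
      (invGammaMixture α' β' (p.1 ^ 2) p.2).toReal)) ((rpowMeasure (2 * q)).prod volume) := by
  have hpair := lintegral_lintegral_inner_sq_mul_invGammaMixture_mul hα hβ hqr v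
  have hint := integrable_toReal_of_lintegral_lintegral_ne_top (by fun_prop)
    (hpair ▸ ENNReal.ofReal_ne_top)
  simpa only [ENNReal.toReal_mul, ENNReal.toReal_ofReal (sq_nonneg _)] using hint

lemma integral_inner_sq_mul_invGammaMixture_mul {q r α α' β β' : ℝ}
    (hα : BesselAdmissible q α α') (hβ : BesselAdmissible r β β') (hqr : q + r + 1 = halfDim E)
    (v : E) :
    ∫ p : ℝ × E, ⟪v, p.2⟫ ^ 2 * ((invGammaMixture α β (p.1 ^ 2) p.2).toReal *
        (invGammaMixture α' β' (p.1 ^ 2) p.2).toReal) ∂(rpowMeasure (2 * q)).prod volume =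
      ‖v‖ ^ 2 * (π ^ halfDim E / (2 * Gamma (halfDim E + 1))) *
        (2⁻¹ * laplaceDerivMoment q r α α' β β') := by
  have hpair := lintegral_lintegral_inner_sq_mul_invGammaMixture_mul hα hβ hqr v
  have hval := integral_toReal_prod (by fun_prop) (hpair ▸ ENNReal.ofReal_ne_top)
  have hΓ : 0 < Gamma (halfDim E + 1) := Gamma_pos_of_pos (by unfold halfDim; positivity)
  have := laplaceDerivMoment_pos hα hβ
  rw [hpair, ENNReal.toReal_ofReal (by positivity)] at hval
  simpa only [ENNReal.toReal_mul, ENNReal.toReal_ofReal (sq_nonneg _)] using hval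

lemma rpow_mul_inner_sq_mul_deriv_bubbleExtension_sq (hγ : 0 < γ) (hd : γ < halfDim E) {y : ℝ}
    (hy : 0 < y) (v x : E) :
    y ^ (3 - 2 * γ) * ⟪v, x⟫ ^ 2 * deriv (bubbleExtension γ x) y ^ 2 =
      y ^ (2 * (1 - γ) - 1) * (4 * bubbleConst E γ ^ 2 *
        (γ ^ 2 * (⟪v, x⟫ ^ 2 * ((invGammaMixture γ (-γ) (y ^ 2) x).toReal *
            (invGammaMixture γ (-γ) (y ^ 2) x).toReal)) -
          2 * γ * (⟪v, x⟫ ^ 2 * ((invGammaMixture γ (-γ) (y ^ 2) x).toReal *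
            (invGammaMixture (γ + 1) (-γ) (y ^ 2) x).toReal)) +
          ⟪v, x⟫ ^ 2 * ((invGammaMixture (γ + 1) (-γ) (y ^ 2) x).toReal *
            (invGammaMixture (γ + 1) (-γ) (y ^ 2) x).toReal))) := by
  have hpow : y ^ (3 - 2 * γ) = y ^ (2 * (1 - γ) - 1) * y ^ 2 := by
    rw [← rpow_natCast, ← rpow_add hy]
    ring_nf
  rw [deriv_bubbleExtension hγ hd hy, hpow]
  field_simp
  ring

theorem integral_integral_inner_sq_mul_deriv_bubbleExtension_sq (hγ : 0 < γ) (hγ₁ : γ < 1)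
    (hd : 2 + γ < halfDim E) (v : E) :
    ∫ y in Ioi (0 : ℝ), ∫ x : E,
        y ^ (3 - 2 * γ) * ⟪v, x⟫ ^ 2 * deriv (bubbleExtension γ x) y ^ 2 =
      4 * bubbleConst E γ ^ 2 * (‖v‖ ^ 2 * (π ^ halfDim E / (2 * Gamma (halfDim E + 1))) * (2⁻¹ *
        (γ ^ 2 * laplaceDerivMoment (1 - γ) (halfDim E - 2 + γ) γ γ (-γ) (-γ) -
          2 * γ * laplaceDerivMoment (1 - γ) (halfDim E - 2 + γ) γ (γ + 1) (-γ) (-γ) +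
          laplaceDerivMoment (1 - γ) (halfDim E - 2 + γ) (γ + 1) (γ + 1) (-γ) (-γ)))) := by
  have hα := besselAdmissible_one_sub hγ hγ₁
  have hα₀₁ := hα.symm.raise.symm
  have hα₁₁ := hα₀₁.raise
  have hβ := besselAdmissible_sub_two_add hγ hd
  have hqr : 1 - γ + (halfDim E - 2 + γ) + 1 = halfDim E := by ring
  have h₀₀ := (integrable_inner_sq_mul_invGammaMixture_mul hα hβ hqr v).const_mul (γ ^ 2)
  have h₀₁ := (integrable_inner_sq_mul_invGammaMixture_mul hα₀₁ hβ hqr v).const_mul (2 * γ)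
  have h₁₁ := integrable_inner_sq_mul_invGammaMixture_mul hα₁₁ hβ hqr v
  set V : ℝ → ℝ → E → ℝ := fun α y x ↦ (invGammaMixture α (-γ) (y ^ 2) x).toReal
  set F : ℝ → E → ℝ := fun y x ↦ γ ^ 2 * (⟪v, x⟫ ^ 2 * (V γ y x * V γ y x)) -
    2 * γ * (⟪v, x⟫ ^ 2 * (V γ y x * V (γ + 1) y x)) +
    ⟪v, x⟫ ^ 2 * (V (γ + 1) y x * V (γ + 1) y x)
  have hF : Integrable (Function.uncurry F) ((rpowMeasure (2 * (1 - γ))).prod volume) :=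
    (h₀₀.sub h₀₁).add h₁₁
  calc
    _ = ∫ y in Ioi (0 : ℝ), y ^ (2 * (1 - γ) - 1) * ∫ x : E, 4 * bubbleConst E γ ^ 2 * F y x := by
      refine setIntegral_congr_fun measurableSet_Ioi fun y (hy : 0 < y) ↦ ?_
      simp only [← integral_const_mul, F, V,
        rpow_mul_inner_sq_mul_deriv_bubbleExtension_sq hγ (by linarith : γ < halfDim E) hy]
    _ = 4 * bubbleConst E γ ^ 2 *
          ∫ p : ℝ × E, F p.1 p.2 ∂(rpowMeasure (2 * (1 - γ))).prod volume := by
      rw [setIntegral_rpow_mul_integral _ (hF.const_mul _), integral_const_mul]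
    _ = _ := by
      congr 1
      refine (integral_add (h₀₀.sub h₀₁) h₁₁).trans ?_
      rw [integral_sub' h₀₀ h₀₁, integral_const_mul, integral_const_mul,
        integral_inner_sq_mul_invGammaMixture_mul hα hβ hqr,
        integral_inner_sq_mul_invGammaMixture_mul hα₀₁ hβ hqr,
        integral_inner_sq_mul_invGammaMixture_mul hα₁₁ hβ hqr]
      ring

end WeightedNorms

section Moments

variable {γ : ℝ}

lemma besselMoment_one_sub_raise (hγ : 0 < γ) (hγ₁ : γ < 1) :
    besselMoment (1 - γ) γ (γ + 1) = besselMoment (1 - γ) γ γ * ((1 + γ) / 2) := by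
  rw [besselMoment_comm, (besselAdmissible_one_sub hγ hγ₁).besselMoment_raise]
  ring_nf

lemma besselMoment_one_sub_raise_raise (hγ : 0 < γ) (hγ₁ : γ < 1) :
    besselMoment (1 - γ) (γ + 1) (γ + 1) =
      besselMoment (1 - γ) γ γ * ((1 + γ) * (2 + γ) / 6) := by
  rw [(besselAdmissible_one_sub hγ hγ₁).symm.raise.symm.besselMoment_raise,
    besselMoment_one_sub_raise hγ hγ₁]
  ring_nf

lemma besselMoment_two_sub (hγ : 0 < γ) (hγ₁ : γ < 1) :
    besselMoment (2 - γ) γ γ = besselMoment (1 - γ) γ γ * ((1 - γ) * (1 + γ) / 6) := by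
  have hshift := (besselAdmissible_one_sub hγ hγ₁).symm.raise.symm.besselMoment_shift_right
  rw [besselMoment_one_sub_raise hγ hγ₁, add_sub_cancel_right,
    show 1 - γ + 1 = 2 - γ by ring] at hshift
  rw [hshift]
  ring_nf

lemma laplaceDerivMoment_sub_add {n a : ℝ} (hγ : 0 < γ) (hγ₁ : γ < 1) (ha : a = 1 - 2 * γ)
    (hn : 4 + 2 * γ < n) :
    γ ^ 2 * laplaceDerivMoment (1 - γ) (n / 2 - 2 + γ) γ γ (-γ) (-γ) -
        2 * γ * laplaceDerivMoment (1 - γ) (n / 2 - 2 + γ) γ (γ + 1) (-γ) (-γ) +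
        laplaceDerivMoment (1 - γ) (n / 2 - 2 + γ) (γ + 1) (γ + 1) (-γ) (-γ) =
      (3 + a) / (80 * (3 - a) * (n - 3)) *
        (5 * n ^ 3 - 30 * n ^ 2 - (a ^ 2 + 2 * a - 55) * n - 2 * a ^ 2 + 16 * a - 30) *
        (besselMoment (2 - γ) γ γ * besselMoment (n / 2 - 2 + γ) (-γ) (-γ)) := by
  have hα := besselAdmissible_one_sub hγ hγ₁
  have hβ := besselAdmissible_sub_two_add (h := n / 2) hγ (by linarith)
  have hσ₀₀ : 2 * (1 - γ) + γ + γ = 2 := by ring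
  have hσ₀₁ : 2 * (1 - γ) + γ + (γ + 1) = 3 := by ring
  have hσ₁₁ : 2 * (1 - γ) + (γ + 1) + (γ + 1) = 4 := by ring
  have hτ : 2 * (n / 2 - 2 + γ) + -γ + -γ = n - 4 := by ring
  have hτ₁ : n - 4 + 1 = n - 3 := by ring
  have hγ₁' : 1 + γ ≠ 0 := by linarith
  have hn₃ : n - 3 ≠ 0 := by linarith
  have hn₄ : n - 4 ≠ 0 := by linarith
  have ha₃ : 3 - a = 2 * (1 + γ) := by linarith
  rw [laplaceDerivMoment_eq hα hβ, laplaceDerivMoment_eq hα.symm.raise.symm hβ,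
    laplaceDerivMoment_eq hα.symm.raise.symm.raise hβ, besselMoment_one_sub_raise_raise hγ hγ₁,
    besselMoment_one_sub_raise hγ hγ₁, besselMoment_two_sub hγ hγ₁, hσ₀₀, hσ₀₁, hσ₁₁, hτ, hτ₁, ha₃]
  subst ha
  field_simp
  ring

end Moments

theorem stmt_13_general {E : Type*} [NormedAddCommGroup E] [InnerProductSpace ℝ E]
    [MeasurableSpace E] [BorelSpace E] [FiniteDimensional ℝ E] {γ a n : ℝ} (hγ : γ ∈ Ioo (0 : ℝ) 1)
    (ha : a = 1 - 2 * γ) (hn : n = Module.finrank ℝ E) (hn₄ : 4 + 2 * γ < n) (v : E) :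
    ∫ y in Ioi (0 : ℝ), ∫ x : E, y ^ (a + 2) * ⟪v, x⟫ ^ 2 * deriv (bubbleExtension γ x) y ^ 2 =
      ‖v‖ ^ 2 * ((3 + a) / (20 * n * (3 - a) * (n - 3)) *
        (5 * n ^ 3 - 30 * n ^ 2 - (a ^ 2 + 2 * a - 55) * n - 2 * a ^ 2 + 16 * a - 30) *
        ∫ y in Ioi (0 : ℝ), ∫ x : E, y ^ (a + 2) * bubbleExtension γ x y ^ 2) := by
  obtain ⟨hγ₀, hγ₁⟩ := hγ
  have hd : halfDim E = n / 2 := by rw [halfDim, hn]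
  have hΓ : Gamma (n / 2) ≠ 0 := (Gamma_pos_of_pos (by linarith)).ne'
  rw [show a + 2 = 3 - 2 * γ by linarith,
    integral_integral_inner_sq_mul_deriv_bubbleExtension_sq hγ₀ hγ₁ (by linarith) v,
    integral_integral_bubbleExtension_sq hγ₀ (by linarith) (by linarith), hd,
    laplaceDerivMoment_sub_add hγ₀ hγ₁ ha hn₄, Gamma_add_one (by linarith)]
  have hn₀ : n ≠ 0 := by linarith
  have hn₃ : n - 3 ≠ 0 := by linarith
  have ha₃ : 3 - a ≠ 0 := by linarith
  field_simp
  ring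

end

open MeasureTheory Real in
theorem stmt_13 (γ : ℝ) (hγ : γ ∈ Set.Ioo (0:ℝ) 1) (a : ℝ) (ha : a = 1 - 2*γ)
    (n : ℕ) (hn : 4 + 2*γ < (n:ℝ))
    (w : EuclideanSpace ℝ (Fin n) → ℝ)
    (hw : ∀ x : EuclideanSpace ℝ (Fin n), w x = (1 + ‖x‖^2) ^ (-(((n:ℝ) - 2*γ)/2)))
    (U : EuclideanSpace ℝ (Fin n) → ℝ → ℝ)
    (hU : ∀ x : EuclideanSpace ℝ (Fin n), ∀ y : ℝ,
      U x y = ∫ ξ : EuclideanSpace ℝ (Fin n),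
        y ^ (2*γ) * (‖x - ξ‖^2 + y^2) ^ (-(((n:ℝ) + 2*γ)/2)) * w ξ) :
    ∫ y in Set.Ioi (0:ℝ), ∫ x : EuclideanSpace ℝ (Fin n),
      y ^ (a+2) * (x ⟨0, by exact_mod_cast show (0:ℝ) < (n:ℝ) by linarith [hγ.1]⟩)^2 *
        (deriv (U x) y)^2 =
    ((3+a) / (20*(n:ℝ)*(3-a)*((n:ℝ)-3))) *
      (5*(n:ℝ)^3 - 30*(n:ℝ)^2 - (a^2 + 2*a - 55)*(n:ℝ) - 2*a^2 + 16*a - 30) *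
      ∫ y in Set.Ioi (0:ℝ), ∫ x : EuclideanSpace ℝ (Fin n), y ^ (a+2) * (U x y)^2 := by
  obtain rfl : U = bubbleExtension γ := by
    funext x y
    simp only [hU, hw, bubbleExtension, halfDim, finrank_euclideanSpace_fin, add_div, sub_div,
      mul_div_cancel_left₀ γ two_ne_zero]
  have hn₀ : 0 < n := by exact_mod_cast (by linarith [hγ.1] : (0 : ℝ) < n)
  simpa [EuclideanSpace.inner_single_left] using
    stmt_13_general hγ ha (by simp) hn (EuclideanSpace.single (⟨0, hn₀⟩ : Fin n) (1 : ℝ))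
end
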